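/- arXiv:1407.5256 — 2 statements merged into one kernel-verified Lean document; each statement's English description precedes it below -/
import Mathlib

section
/- Let R be a (not necessarily commutative) ring and let f(t) be a monic polynomial in R[t] all of whose coefficients lie in the center of R. If M is a left R[t]-module which is annihilated by f(t) (i.e. f(t)·m = 0 for all m in M) and which has projective dimension at most 1 as an R[t]-module, then M is projective as an R-module. -/
/-!
Since `f` kills `M`, multiplication by `f` on `P₀` factors through the inclusion `ι : P₁ → P₀`,
say as `ι ∘ g`, and then `g ∘ ι` is multiplication by `f` on `P₁`. As `f` is central and monic,
division by `f` is an `R`-linear left inverse of multiplication by `f` on `R[t]`, which extends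
coordinatewise to free modules and so gives such a left inverse `r` on their direct summand `P₁`.
Then `r ∘ g` is an `R`-linear retraction of `ι`, and `M` is a direct summand of the `R`-projective
module `P₀`.
-/

open Polynomial

section DivByMonic

variable {R : Type*} [Ring R] {f : R[X]}

theorem mul_smul_comm_of_coeff_mem_center (hf : ∀ n, f.coeff n ∈ Subring.center R)
    (c : R) (q : R[X]) : f * c • q = c • (f * q) := by
  have C_comm : f * C c = C c * f := by
    ext n
    rw [coeff_mul_C, coeff_C_mul, Subring.mem_center_iff.1 (hf n) c]
  rw [smul_eq_C_mul, smul_eq_C_mul, ← mul_assoc, C_comm, mul_assoc]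

theorem add_divByMonic (hm : f.Monic) (p q : R[X]) : (p + q) /ₘ f = p /ₘ f + q /ₘ f := by
  nontriviality R
  refine (div_modByMonic_unique _ (p %ₘ f + q %ₘ f) hm ⟨?_, ?_⟩).1
  · rw [mul_add, add_add_add_comm, modByMonic_add_div, modByMonic_add_div]
  · exact (degree_add_le _ _).trans_lt
      (max_lt (degree_modByMonic_lt p hm) (degree_modByMonic_lt q hm))

theorem smul_divByMonic (hm : f.Monic) {c : R} (hc : ∀ q : R[X], f * c • q = c • (f * q))
    (p : R[X]) : (c • p) /ₘ f = c • (p /ₘ f) := by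
  nontriviality R
  refine (div_modByMonic_unique _ (c • (p %ₘ f)) hm ⟨?_, ?_⟩).1
  · rw [hc, ← smul_add, modByMonic_add_div]
  · exact (degree_smul_le c _).trans_lt (degree_modByMonic_lt p hm)

/-- The quotient map `p ↦ p /ₘ f` as an `R`-linear map, where `hf` encodes that `f` commutes
with the constant polynomials. -/
noncomputable def divByMonicLinearMap (hm : f.Monic)
    (hf : ∀ (c : R) (q : R[X]), f * c • q = c • (f * q)) : R[X] →ₗ[R] R[X] where
  toFun p := p /ₘ f
  map_add' := add_divByMonic hm
  map_smul' c := smul_divByMonic hm (hf c)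

theorem divByMonicLinearMap_mul_left (hm : f.Monic)
    (hf : ∀ (c : R) (q : R[X]), f * c • q = c • (f * q)) (q : R[X]) :
    divByMonicLinearMap hm hf (f * q) = q :=
  mul_divByMonic_cancel_left q hm

end DivByMonic

theorem exists_leftInverse_of_forall_mem_range {R N P : Type*} [Semiring R]
    [AddCommMonoid N] [Module R N] [AddCommMonoid P] [Module R P]
    {ι : N →ₗ[R] P} (hι : Function.Injective ι)
    {φ : P →ₗ[R] P} (hφ : ∀ x, φ x ∈ LinearMap.range ι) {ψ r : N →ₗ[R] N}
    (hψ : ∀ y, ι (ψ y) = φ (ι y)) (hr : ∀ y, r (ψ y) = y) :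
    ∃ s : P →ₗ[R] N, s ∘ₗ ι = LinearMap.id := by
  let e : N ≃ₗ[R] LinearMap.range ι := LinearEquiv.ofInjective ι hι
  let g : P →ₗ[R] N := e.symm ∘ₗ φ.codRestrict (LinearMap.range ι) hφ
  have g_comp_ι (y : N) : g (ι y) = ψ y :=
    e.symm_apply_eq.2 (Subtype.ext (hψ y).symm)
  refine ⟨r ∘ₗ g, LinearMap.ext fun y ↦ ?_⟩
  calc r (g (ι y)) = r (ψ y) := by rw [g_comp_ι]
    _ = y := hr y

section ScalarTower

variable {R A : Type*} [Semiring R] [Semiring A] [Module R A]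

/-- Multiplication by `a` on an `A`-module as an `R`-linear map, where `ha` encodes that `a`
commutes with the image of `R` in `A`. -/
def smulLinearMapOfCommute (P : Type*) [AddCommMonoid P] [Module R P] [Module A P]
    [IsScalarTower R A P] {a : A} (ha : ∀ (c : R) (x : A), a * c • x = c • (a * x)) :
    P →ₗ[R] P where
  toFun x := a • x
  map_add' := smul_add a
  map_smul' c x := by
    calc a • c • x = (a * c • (1 : A)) • x := by rw [mul_smul, smul_one_smul]
      _ = c • a • x := by rw [ha, mul_one, smul_assoc]

variable [IsScalarTower R A A] {P : Type*} [AddCommMonoid P] [Module R P] [Module A P]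
  [IsScalarTower R A P]

theorem projective_of_projective_of_isScalarTower [Module.Projective R A]
    [hP : Module.Projective A P] : Module.Projective R P := by
  classical
  obtain ⟨s, hs⟩ := hP.out
  have : Module.Projective R (P →₀ A) := .of_equiv' (finsuppLequivDFinsupp R).symm
  exact .of_split (s.restrictScalars R)
    ((Finsupp.linearCombination A id).restrictScalars R) (LinearMap.ext hs)

theorem exists_leftInverse_smul_of_projective [hP : Module.Projective A P] {a : A}
    {d : A →ₗ[R] A} (hd : ∀ x, d (a * x) = x) :
    ∃ r : P →ₗ[R] P, ∀ x, r (a • x) = x := by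
  obtain ⟨s, hs⟩ := hP.out
  let π : (P →₀ A) →ₗ[A] P := Finsupp.linearCombination A id
  let D : (P →₀ A) →ₗ[R] P →₀ A := Finsupp.mapRange.linearMap d
  have D_smul (v : P →₀ A) : D (a • v) = v := by
    ext i
    exact hd (v i)
  refine ⟨π.restrictScalars R ∘ₗ D ∘ₗ s.restrictScalars R, fun x ↦ ?_⟩
  calc π (D (s (a • x))) = π (s x) := by rw [map_smul, D_smul]
    _ = x := hs x

theorem annihilated_of_projdim_le_one_is_projective_general {a : A}
    (ha : ∀ (c : R) (x : A), a * c • x = c • (a * x))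
    {d : A →ₗ[R] A} (hd : ∀ x, d (a * x) = x)
    {M P₀ P₁ : Type*} [AddCommGroup M] [Module R M] [Module A M] [IsScalarTower R A M]
    [AddCommGroup P₀] [Module R P₀] [Module A P₀] [IsScalarTower R A P₀]
    [AddCommGroup P₁] [Module R P₁] [Module A P₁] [IsScalarTower R A P₁]
    (hann : ∀ m : M, a • m = 0) [Module.Projective R P₀] [Module.Projective A P₁]
    {ι : P₁ →ₗ[A] P₀} {p : P₀ →ₗ[A] M} (hι : Function.Injective ι)
    (hp : Function.Surjective p) (hexact : Function.Exact ι p) :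
    Module.Projective R M := by
  obtain ⟨r, hr⟩ := exists_leftInverse_smul_of_projective (P := P₁) hd
  have smul_mem_range (x : P₀) : a • x ∈ LinearMap.range ι :=
    (hexact (a • x)).1 (by rw [map_smul, hann])
  have retraction : ∃ s : P₀ →ₗ[R] P₁, s ∘ₗ ι.restrictScalars R = LinearMap.id :=
    exists_leftInverse_of_forall_mem_range hι (φ := smulLinearMapOfCommute P₀ ha)
      smul_mem_range (ψ := smulLinearMapOfCommute P₁ ha) (map_smul ι a) hr
  have hexactR : Function.Exact (ι.restrictScalars R) (p.restrictScalars R) := hexact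
  obtain ⟨σ, hσ⟩ := ((hexactR.split_tfae hι hp).out 0 1).2 retraction
  exact .of_split σ (p.restrictScalars R) hσ

end ScalarTower

theorem isScalarTower_compHom_C (R M : Type*) [Semiring R] [AddCommMonoid M]
    [Module R[X] M] :
    letI : Module R M := Module.compHom M (C : R →+* R[X])
    IsScalarTower R R[X] M :=
  letI : Module R M := Module.compHom M (C : R →+* R[X])
  ⟨fun c q m ↦ by rw [smul_eq_C_mul, mul_smul]; rfl⟩

/-- Let `R` be a (not necessarily commutative) ring and `f` a monic polynomial in `R[t]`
all of whose coefficients are central in `R`.  If `M` is a left `R[t]`-module annihilated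
by `f` and of projective dimension at most `1` over `R[t]` (witnessed by a short exact
sequence `0 → P₁ → P₀ → M → 0` with `P₀`, `P₁` projective `R[t]`-modules), then `M` is
projective as an `R`-module (via restriction along `R → R[t]`). -/
theorem annihilated_of_projdim_le_one_is_projective
    (R : Type*) [Ring R] (f : Polynomial R) (hmonic : f.Monic)
    (hcentral : ∀ n : ℕ, f.coeff n ∈ Subring.center R)
    (M : Type*) [AddCommGroup M] [Module (Polynomial R) M]
    (hann : ∀ m : M, f • m = 0)
    (P₀ P₁ : Type*) [AddCommGroup P₀] [Module (Polynomial R) P₀]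
    [AddCommGroup P₁] [Module (Polynomial R) P₁]
    (hP₀ : Module.Projective (Polynomial R) P₀)
    (hP₁ : Module.Projective (Polynomial R) P₁)
    (ι : P₁ →ₗ[Polynomial R] P₀) (p : P₀ →ₗ[Polynomial R] M)
    (hι : Function.Injective ι) (hp : Function.Surjective p)
    (hexact : LinearMap.range ι = LinearMap.ker p) :
    letI : Module R M := Module.compHom M (Polynomial.C : R →+* Polynomial R)
    Module.Projective R M := by
  let : Module R M := Module.compHom M C
  let : Module R P₀ := Module.compHom P₀ C
  let : Module R P₁ := Module.compHom P₁ C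
  have := isScalarTower_compHom_C R M
  have := isScalarTower_compHom_C R P₀
  have := isScalarTower_compHom_C R P₁
  have : Module.Projective R P₀ := projective_of_projective_of_isScalarTower (A := R[X])
  have hcomm : ∀ (c : R) (q : R[X]), f * c • q = c • (f * q) :=
    mul_smul_comm_of_coeff_mem_center hcentral
  exact annihilated_of_projdim_le_one_is_projective_general hcomm
    (divByMonicLinearMap_mul_left hmonic hcomm) hann hι hp (LinearMap.exact_iff.2 hexact.symm)
end

section
/- K_0 = R(β+α_i) e(β,α_i) ⊗_{R(β)} R^Λ(β) and K_1 = R(β+α_i) e(α_i,β) ⊗_{R(β)} R^Λ(β) are finitely generated projective as right modules over R^Λ(β) ⊗_k k[t_i]. -/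
/- ## Scaffold: Khovanov–Lauda–Rouquier algebras -/

open scoped TensorProduct

/-- A symmetrizable Cartan datum together with the structure constants of the
family of polynomials `Q`. -/
structure CartanDatum (k : Type) [Field k] (I : Type) [Fintype I] [DecidableEq I] : Type where
  a : I → I → ℤ
  d : I → ℤ
  t : I → I → ℕ → ℕ → k
  a_diag : ∀ i, a i i = 2
  a_nonpos : ∀ i j, i ≠ j → a i j ≤ 0
  a_zero_iff : ∀ i j, a i j = 0 ↔ a j i = 0
  d_pos : ∀ i, 0 < d i
  symmetrize : ∀ i j, d i * a i j = d j * a j i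
  t_symm : ∀ i j p q, t i j p q = t j i q p
  t_lead : ∀ i j, i ≠ j → t i j (-(a i j)).toNat 0 ≠ 0

namespace KLR

variable {k : Type} [Field k] {I : Type} [Fintype I] [DecidableEq I]

/-- The symmetric bilinear form `(α_i, α_j) = d_i a_{ij}`. -/
def B (C : CartanDatum k I) (i j : I) : ℤ := C.d i * C.a i j

/-- Generators of the KLR algebra `R(n)`. -/
inductive Gen (I : Type) (n : ℕ) : Type
  | e (ν : Fin n → I) : Gen I n
  | x (a : Fin n) : Gen I n
  | tau (l : ℕ) (h : l + 1 < n) : Gen I n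

variable (k) in
/-- The free algebra on the generators. -/
abbrev FA (I : Type) (n : ℕ) : Type := FreeAlgebra k (Gen I n)

variable (k) in
def ge {n : ℕ} (ν : Fin n → I) : FA k I n := FreeAlgebra.ι k (Gen.e ν)

variable (k) in
def gx {n : ℕ} (a : Fin n) : FA k I n := FreeAlgebra.ι k (Gen.x a)

variable (k) in
def gt {n : ℕ} (l : ℕ) (h : l + 1 < n) : FA k I n := FreeAlgebra.ι k (Gen.tau l h)

/-- The polynomial `Q_{ij}(u,v)` evaluated on two elements of an algebra. -/
def Qel (C : CartanDatum k I) {A : Type} [Ring A] [Algebra k A] (i j : I) (u v : A) : A :=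
  if i = j then 0 else
    ∑ p ∈ Finset.range ((-(C.a i j)).toNat + 1), ∑ q ∈ Finset.range ((-(C.a j i)).toNat + 1),
      if C.d i * (p : ℤ) + C.d j * (q : ℤ) = -(C.d i * C.a i j) then
        C.t i j p q • (u ^ p * v ^ q) else 0

/-- The divided difference `(Q_{ij}(u,v) - Q_{ij}(w,v))/(u - w)` evaluated on elements. -/
def Qdiff (C : CartanDatum k I) {A : Type} [Ring A] [Algebra k A] (i j : I) (u v w : A) : A :=
  if i = j then 0 else
    ∑ p ∈ Finset.range ((-(C.a i j)).toNat + 1), ∑ q ∈ Finset.range ((-(C.a j i)).toNat + 1),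
      if C.d i * (p : ℤ) + C.d j * (q : ℤ) = -(C.d i * C.a i j) then
        C.t i j p q • ((∑ c ∈ Finset.range p, u ^ c * w ^ (p - 1 - c)) * v ^ q) else 0

/-- The defining relations of the KLR algebra `R(n)`. -/
inductive Rel (C : CartanDatum k I) (n : ℕ) : FA k I n → FA k I n → Prop
  | ee : ∀ ν ν' : Fin n → I, Rel C n (ge k ν * ge k ν') (if ν = ν' then ge k ν else 0)
  | esum : Rel C n (∑ ν : Fin n → I, ge k ν) 1
  | xx : ∀ a b : Fin n, Rel C n (gx k a * gx k b) (gx k b * gx k a)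
  | xe : ∀ (a : Fin n) (ν : Fin n → I), Rel C n (gx k a * ge k ν) (ge k ν * gx k a)
  | taue : ∀ (l : ℕ) (h : l + 1 < n) (ν : Fin n → I),
      Rel C n (gt k l h * ge k ν)
        (ge k (ν ∘ Equiv.swap (⟨l, Nat.lt_of_succ_lt h⟩ : Fin n) ⟨l + 1, h⟩) * gt k l h)
  | tautau : ∀ (l : ℕ) (h : l + 1 < n) (l' : ℕ) (h' : l' + 1 < n),
      (l + 1 < l' ∨ l' + 1 < l) →
      Rel C n (gt k l h * gt k l' h') (gt k l' h' * gt k l h)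
  | tausq : ∀ (l : ℕ) (h : l + 1 < n) (ν : Fin n → I),
      Rel C n (gt k l h ^ 2 * ge k ν)
        (Qel C (ν ⟨l, Nat.lt_of_succ_lt h⟩) (ν ⟨l + 1, h⟩)
          (gx k ⟨l, Nat.lt_of_succ_lt h⟩) (gx k ⟨l + 1, h⟩) * ge k ν)
  | taux : ∀ (l : ℕ) (h : l + 1 < n) (m : Fin n) (ν : Fin n → I),
      Rel C n ((gt k l h * gx k m
          - gx k (Equiv.swap (⟨l, Nat.lt_of_succ_lt h⟩ : Fin n) ⟨l + 1, h⟩ m) * gt k l h) * ge k ν)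
        (if m = ⟨l, Nat.lt_of_succ_lt h⟩ ∧ ν ⟨l, Nat.lt_of_succ_lt h⟩ = ν ⟨l + 1, h⟩ then
            -(ge k ν)
          else if m = (⟨l + 1, h⟩ : Fin n) ∧ ν ⟨l, Nat.lt_of_succ_lt h⟩ = ν ⟨l + 1, h⟩ then
            ge k ν
          else 0)
  | braid : ∀ (l : ℕ) (h2 : l + 2 < n) (ν : Fin n → I),
      Rel C n ((gt k (l + 1) h2 * gt k l (Nat.lt_of_succ_lt h2) * gt k (l + 1) h2
          - gt k l (Nat.lt_of_succ_lt h2) * gt k (l + 1) h2 * gt k l (Nat.lt_of_succ_lt h2))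
          * ge k ν)
        (if ν ⟨l, Nat.lt_of_succ_lt (Nat.lt_of_succ_lt h2)⟩ = ν ⟨l + 2, h2⟩ then
            Qdiff C (ν ⟨l, Nat.lt_of_succ_lt (Nat.lt_of_succ_lt h2)⟩)
              (ν ⟨l + 1, Nat.lt_of_succ_lt h2⟩)
              (gx k ⟨l, Nat.lt_of_succ_lt (Nat.lt_of_succ_lt h2)⟩)
              (gx k ⟨l + 1, Nat.lt_of_succ_lt h2⟩)
              (gx k ⟨l + 2, h2⟩) * ge k ν
          else 0)

/-- The Khovanov–Lauda–Rouquier algebra `R(n)`. -/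
abbrev Alg (C : CartanDatum k I) (n : ℕ) : Type := RingQuot (Rel C n)

variable (C : CartanDatum k I)

/-- The generator `e(ν)` of `R(n)`. -/
noncomputable def Ee {n : ℕ} (ν : Fin n → I) : Alg C n :=
  RingQuot.mkAlgHom k (Rel C n) (ge k ν)

/-- The generator `x_a` of `R(n)`. -/
noncomputable def Xx {n : ℕ} (a : Fin n) : Alg C n :=
  RingQuot.mkAlgHom k (Rel C n) (gx k a)

/-- The generator `τ_l` of `R(n)`. -/
noncomputable def Tt {n : ℕ} (l : ℕ) (h : l + 1 < n) : Alg C n :=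
  RingQuot.mkAlgHom k (Rel C n) (gt k l h)

variable (I) in
/-- The height of `β = Σ k_i α_i`. -/
def ht (β : I → ℕ) : ℕ := ∑ i, β i

/-- The content of a sequence `ν`. -/
def content {m : ℕ} (ν : Fin m → I) : I → ℕ :=
  fun i => (Finset.univ.filter (fun a => ν a = i)).card

/-- The set `I^β` of sequences of length `m` with content `β`. -/
def seqs (β : I → ℕ) (m : ℕ) : Finset (Fin m → I) :=
  Finset.univ.filter (fun ν => content ν = β)

/-- The central idempotent `e(β)` in `R(n)`. -/
noncomputable def eIdem (n : ℕ) (β : I → ℕ) : Alg C n := ∑ ν ∈ seqs β n, Ee C ν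

/-- `β + α_i`. -/
def addA (β : I → ℕ) (i : I) : I → ℕ := fun j => β j + if j = i then 1 else 0

/-- The idempotent `e(β, α_i)` of `R(n+1)` (sum over `ν ∈ I^{β+α_i}` with `ν_{n+1} = i`). -/
noncomputable def eR (n : ℕ) (β : I → ℕ) (i : I) : Alg C (n + 1) :=
  ∑ ν ∈ (seqs (addA β i) (n + 1)).filter (fun ν => ν (Fin.last n) = i), Ee C ν

/-- The idempotent `e(α_i, β)` of `R(n+1)` (sum over `ν ∈ I^{β+α_i}` with `ν_1 = i`). -/
noncomputable def eL (n : ℕ) (β : I → ℕ) (i : I) : Alg C (n + 1) :=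
  ∑ ν ∈ (seqs (addA β i) (n + 1)).filter (fun ν => ν 0 = i), Ee C ν

/-- The idempotent `e(β - α_i, α_i)` of `R(n)`: sum over `ν ∈ I^β` with last entry `i`;
this is `0` when the coefficient of `α_i` in `β` is `0` or `n = 0`. -/
noncomputable def eD (n : ℕ) (β : I → ℕ) (i : I) : Alg C n :=
  ∑ ν ∈ (seqs β n).filter (fun ν => if h : 0 < n then ν ⟨n - 1, Nat.sub_lt h one_pos⟩ = i
      else False), Ee C ν

/-- The relations defining `R(β) = R(n)e(β)` (a unital ring with unit the image of
`e(β)`): the KLR relations together with the relation `e(β) = 1`. -/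
inductive URel (n : ℕ) (β : I → ℕ) : FA k I n → FA k I n → Prop
  | base : ∀ {x y : FA k I n}, Rel C n x y → URel n β x y
  | unit : URel n β (∑ ν ∈ seqs β n, ge k ν) 1

/-- The algebra `R(β)`, realized as the quotient of `R(n)` identifying `e(β)` with `1`. -/
abbrev bAlg (n : ℕ) (β : I → ℕ) : Type := RingQuot (URel C n β)

/-- The canonical projection `R(n) → R(β)`. -/
noncomputable def toB {n : ℕ} {β : I → ℕ} : Alg C n →ₐ[k] bAlg C n β :=
  RingQuot.liftAlgHom (S := k)
    ⟨RingQuot.mkAlgHom k (URel C n β),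
      fun _ _ h => RingQuot.mkAlgHom_rel k (URel.base h)⟩

/-- The element `a^Λ(x_1)` at the level of the free algebra. -/
noncomputable def aLamF (Λ : I → ℕ) (n : ℕ) (β : I → ℕ) : FA k I n :=
  if h : 0 < n then
    ∑ ν ∈ seqs β n, (gx k (⟨0, h⟩ : Fin n)) ^ (Λ (ν ⟨0, h⟩)) * ge k ν
  else 0

/-- The element `a^Λ(x_1)` of `R(β)`. -/
noncomputable def aLam (Λ : I → ℕ) (n : ℕ) (β : I → ℕ) : bAlg C n β :=
  RingQuot.mkAlgHom k (URel C n β) (aLamF Λ n β)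

/-- The relations defining the cyclotomic quotient `R^Λ(β)`. -/
inductive CRel (Λ : I → ℕ) (n : ℕ) (β : I → ℕ) : FA k I n → FA k I n → Prop
  | base : ∀ {x y : FA k I n}, Rel C n x y → CRel Λ n β x y
  | unit : CRel Λ n β (∑ ν ∈ seqs β n, ge k ν) 1
  | cyc : CRel Λ n β (aLamF Λ n β) 0

/-- The cyclotomic KLR algebra `R^Λ(β)`. -/
abbrev cAlg (Λ : I → ℕ) (n : ℕ) (β : I → ℕ) : Type := RingQuot (CRel C Λ n β)

/-- The canonical projection `R(β) → R^Λ(β)`. -/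
noncomputable def toC {Λ : I → ℕ} {n : ℕ} {β : I → ℕ} : bAlg C n β →ₐ[k] cAlg C Λ n β :=
  RingQuot.liftAlgHom (S := k)
    ⟨RingQuot.mkAlgHom k (CRel C Λ n β),
      fun _ _ h => by
        cases h with
        | base hb => exact RingQuot.mkAlgHom_rel k (CRel.base hb)
        | unit => exact RingQuot.mkAlgHom_rel k CRel.unit⟩

/-- The canonical projection `R(n) → R^Λ(β)`. -/
noncomputable def toCB (Λ : I → ℕ) {n : ℕ} {β : I → ℕ} : Alg C n →ₐ[k] cAlg C Λ n β :=
  (toC C).comp (toB C)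

end KLR
namespace KLR

variable {k : Type} [Field k] {I : Type} [Fintype I] [DecidableEq I] (C : CartanDatum k I)

section Homs

/-- Characterization of the non-unital algebra homomorphism `R(n) → R(n+1)` adding `i`
on the right: `e(ν) ↦ e(ν∗(i))`, `x_a ↦ x_a e(…,α_i)`, `τ_l ↦ τ_l e(…,α_i)`,
where the relevant idempotent is supplied as `e`. -/
def IsUpR {n : ℕ} (i : I) (e : Alg C (n + 1)) (φ : Alg C n →ₙₐ[k] Alg C (n + 1)) : Prop :=
  (∀ ν : Fin n → I, φ (Ee C ν) = Ee C (Fin.snoc ν i)) ∧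
  (∀ a : Fin n, φ (Xx C a) = Xx C a.castSucc * e) ∧
  (∀ (l : ℕ) (h : l + 1 < n), φ (Tt C l h) = Tt C l (Nat.lt_succ_of_lt h) * e)

/-- Characterization of the non-unital algebra homomorphism `R(n) → R(n+1)` adding `i`
on the left: `e(ν) ↦ e((i)∗ν)`, `x_a ↦ x_{a+1} e(α_i,…)`, `τ_l ↦ τ_{l+1} e(α_i,…)`. -/
def IsUpL {n : ℕ} (i : I) (e : Alg C (n + 1)) (φ : Alg C n →ₙₐ[k] Alg C (n + 1)) : Prop :=
  (∀ ν : Fin n → I, φ (Ee C ν) = Ee C (Fin.cons i ν)) ∧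
  (∀ a : Fin n, φ (Xx C a) = Xx C a.succ * e) ∧
  (∀ (l : ℕ) (h : l + 1 < n), φ (Tt C l h) = Tt C (l + 1) (Nat.succ_lt_succ h) * e)

/-- Characterization of the non-unital homomorphism `R(β) → R(β+α_i)` (right version). -/
def IsUpRb {n : ℕ} {β γ' : I → ℕ} (i : I)
    (φ : bAlg C n β →ₙₐ[k] bAlg C (n + 1) γ') : Prop :=
  (∀ ν : Fin n → I, φ (toB C (Ee C ν)) = toB C (Ee C (Fin.snoc ν i))) ∧
  (∀ a : Fin n, φ (toB C (Xx C a)) = toB C (Xx C a.castSucc * eR C n β i)) ∧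
  (∀ (l : ℕ) (h : l + 1 < n),
    φ (toB C (Tt C l h)) = toB C (Tt C l (Nat.lt_succ_of_lt h) * eR C n β i))

/-- Characterization of the non-unital homomorphism `R(β) → R(β+α_i)` (left version). -/
def IsUpLb {n : ℕ} {β γ' : I → ℕ} (i : I)
    (φ : bAlg C n β →ₙₐ[k] bAlg C (n + 1) γ') : Prop :=
  (∀ ν : Fin n → I, φ (toB C (Ee C ν)) = toB C (Ee C (Fin.cons i ν))) ∧
  (∀ a : Fin n, φ (toB C (Xx C a)) = toB C (Xx C a.succ * eL C n β i)) ∧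
  (∀ (l : ℕ) (h : l + 1 < n),
    φ (toB C (Tt C l h)) = toB C (Tt C (l + 1) (Nat.succ_lt_succ h) * eL C n β i))

/-- Characterization of the non-unital homomorphism `R^Λ(β) → R^Λ(β+α_i)` (right version). -/
def IsUpRc (Λ : I → ℕ) {n : ℕ} {β γ' : I → ℕ} (i : I)
    (φ : cAlg C Λ n β →ₙₐ[k] cAlg C Λ (n + 1) γ') : Prop :=
  (∀ ν : Fin n → I, φ (toCB C Λ (Ee C ν)) = toCB C Λ (Ee C (Fin.snoc ν i))) ∧
  (∀ a : Fin n, φ (toCB C Λ (Xx C a)) = toCB C Λ (Xx C a.castSucc * eR C n β i)) ∧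
  (∀ (l : ℕ) (h : l + 1 < n),
    φ (toCB C Λ (Tt C l h)) = toCB C Λ (Tt C l (Nat.lt_succ_of_lt h) * eR C n β i))

end Homs

section Tensor

open scoped TensorProduct

variable (S B M : Type) [Ring S] [Algebra k S] [Ring B] [Algebra k B]
  [AddCommGroup M] [Module k M] [Module S M] [IsScalarTower k S M]

variable (k) in
/-- The relation submodule defining the balanced tensor product `B ⊗_S M` where `S`
acts on `B` on the right through the (non-unital) homomorphism `φ : S → B`. -/
def TRel (φ : S →ₙₐ[k] B) : Submodule B (B ⊗[k] M) :=
  Submodule.span B {z | ∃ (b : B) (r : S) (m : M), z = (b * φ r) ⊗ₜ[k] m - b ⊗ₜ[k] (r • m)}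

variable (k) in
/-- The balanced tensor product `B ⊗_S M` (over the homomorphism `φ : S → B`). -/
abbrev OT (φ : S →ₙₐ[k] B) : Type := (B ⊗[k] M) ⧸ TRel k S B M φ

variable (k) in
/-- The canonical projection onto the balanced tensor product. -/
def OTmk (φ : S →ₙₐ[k] B) (z : B ⊗[k] M) : OT k S B M φ := Submodule.Quotient.mk z

end Tensor

section ESub

variable (A : Type) [Ring A] [Algebra k A] (N : Type) [AddCommGroup N] [Module k N]
  [Module A N] [IsScalarTower k A N]

variable (k) in
/-- Multiplication by `e` as a `k`-linear endomorphism of an `A`-module. -/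
def eMap (e : A) : N →ₗ[k] N where
  toFun x := e • x
  map_add' x y := smul_add e x y
  map_smul' c x := by
    simp only [RingHom.id_apply]
    rw [← algebraMap_smul A c x, ← mul_smul, ← Algebra.commutes, mul_smul, algebraMap_smul]

variable (k) in
/-- The `k`-submodule `eN` of an `A`-module `N`. -/
def eSub (e : A) : Submodule k N := LinearMap.range (eMap k A N e)

end ESub

section Grading

variable {A M : Type}

variable (k) in
/-- `𝒜` is an algebra grading of `A`. -/
def IsAlgGrading [Ring A] [Algebra k A] (𝒜 : ℤ → Submodule k A) : Prop :=
  (1 : A) ∈ 𝒜 0 ∧ (∀ {c₁ c₂ : ℤ} {a b : A}, a ∈ 𝒜 c₁ → b ∈ 𝒜 c₂ → a * b ∈ 𝒜 (c₁ + c₂)) ∧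
    DirectSum.IsInternal 𝒜

variable (k) in
/-- `gr` is a grading of the `A`-module `M` compatible with the algebra grading `𝒜`. -/
def IsModGrading [Ring A] [Algebra k A] [AddCommGroup M] [Module k M] [Module A M]
    (𝒜 : ℤ → Submodule k A) (gr : ℤ → Submodule k M) : Prop :=
  DirectSum.IsInternal gr ∧
    ∀ {c m : ℤ} {a : A} {x : M}, a ∈ 𝒜 c → x ∈ gr m → a • x ∈ gr (c + m)

end Grading

section KLRGrading

/-- The canonical grading property for `R(n)`-type quotients: images of `e(ν)` have degree 0,
`x_a e(ν)` has degree `(α_{ν_a}, α_{ν_a})`, and `τ_l e(ν)` has degree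
`-(α_{ν_l}, α_{ν_{l+1}})`.  Here `p : R(n) → A` is the canonical projection onto the
quotient under consideration. -/
def IsKLRGrading {n : ℕ} {A : Type} [Ring A] [Algebra k A] (p : Alg C n →ₐ[k] A)
    (𝒜 : ℤ → Submodule k A) : Prop :=
  IsAlgGrading k 𝒜 ∧
  (∀ ν : Fin n → I, p (Ee C ν) ∈ 𝒜 0) ∧
  (∀ (a : Fin n) (ν : Fin n → I), p (Xx C a * Ee C ν) ∈ 𝒜 (B C (ν a) (ν a))) ∧
  (∀ (l : ℕ) (h : l + 1 < n) (ν : Fin n → I),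
    p (Tt C l h * Ee C ν) ∈ 𝒜 (-(B C (ν ⟨l, Nat.lt_of_succ_lt h⟩) (ν ⟨l + 1, h⟩))))

end KLRGrading

end KLR
namespace KLR

open scoped TensorProduct

variable {k : Type} [Field k] {I : Type} [Fintype I] [DecidableEq I] (C : CartanDatum k I)

section IndGrading

variable (S B M : Type) [Ring S] [Algebra k S] [Ring B] [Algebra k B]
  [AddCommGroup M] [Module k M] [Module S M] [IsScalarTower k S M]

variable (k) in
/-- The induced grading on the balanced tensor product `B ⊗_S M`. -/
def otGr (φ : S →ₙₐ[k] B) (𝒜 : ℤ → Submodule k B) (gr : ℤ → Submodule k M)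
    (c : ℤ) : Submodule k (OT k S B M φ) :=
  Submodule.span k {z | ∃ (c₁ c₂ : ℤ) (b : B) (m : M),
    c₁ + c₂ = c ∧ b ∈ 𝒜 c₁ ∧ m ∈ gr c₂ ∧ z = OTmk k S B M φ (b ⊗ₜ[k] m)}

end IndGrading

section ESubGrading

variable (A N : Type) [Ring A] [Algebra k A] [AddCommGroup N] [Module k N]
  [Module A N] [IsScalarTower k A N]

variable (k) in
/-- The induced grading on the submodule `eN ⊆ N`. -/
def eSubGr (e : A) (gr : ℤ → Submodule k N) (c : ℤ) : Submodule k ↥(eSub k A N e) :=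
  (gr c).comap (eSub k A N e).subtype

end ESubGrading

section Instances

variable (n : ℕ) (β : I → ℕ) (Λ : I → ℕ)

noncomputable instance : Module (bAlg C n β) (cAlg C Λ n β) :=
  Module.compHom _ (toC C (Λ := Λ) (n := n) (β := β)).toRingHom

instance : IsScalarTower k (bAlg C n β) (cAlg C Λ n β) := by
  constructor
  intro c s m
  show (toC C (c • s)) * m = c • (toC C s * m)
  rw [map_smul, Algebra.smul_mul_assoc]

end Instances


end KLR
namespace KLR

open scoped TensorProduct

variable {k : Type} [Field k] {I : Type} [Fintype I] [DecidableEq I] (C : CartanDatum k I)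

/-- `⟨h_i, β⟩ = Σ_j k_j a_{ij}`. -/
def pairH (i : I) (β : I → ℕ) : ℤ := ∑ j, (β j : ℤ) * C.a i j

/-- `(α_i, β) = Σ_j k_j (α_i, α_j)`. -/
def pairB (i : I) (β : I → ℕ) : ℤ := ∑ j, (β j : ℤ) * B C i j

/-- The ordered product `τ_1 τ_2 ⋯ τ_n` in `R(β+α_i)`-type quotients. -/
noncomputable def tauProd (n : ℕ) (γ : I → ℕ) : bAlg C (n + 1) γ :=
  (List.ofFn (fun l : Fin n => toB C (Tt C l.val (Nat.succ_lt_succ l.isLt)))).prod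

/-- The right ideal `Ae` as a `k`-submodule. -/
noncomputable def rId {A : Type} [Ring A] [Algebra k A] (e : A) : Submodule k A :=
  LinearMap.range (LinearMap.mulRight k e)

/-- The left ideal `eA` as a `k`-submodule. -/
noncomputable def lId {A : Type} [Ring A] [Algebra k A] (e : A) : Submodule k A :=
  LinearMap.range (LinearMap.mulLeft k e)

variable (k) in
/-- Characterization of the module structure on `eN` over `S'` acting through
the (non-unital) homomorphism `φ : S' → A`. -/
def IsEAction {A N S' : Type} [Ring A] [Algebra k A] [AddCommGroup N] [Module k N]
    [Module A N] [IsScalarTower k A N] [Ring S'] [Algebra k S']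
    (e : A) (φ : S' →ₙₐ[k] A) (inst : Module S' ↥(eSub k A N e)) : Prop :=
  letI := inst
  ∀ (r : S') (x : ↥(eSub k A N e)), ((r • x : ↥(eSub k A N e)) : N) = φ r • (x : N)

end KLR

namespace KLR

variable {k : Type} [Field k] {I : Type} [Fintype I] [DecidableEq I] (C : CartanDatum k I)

/-- The image of `e(β,α_i)` in `R(β+α_i)`. -/
noncomputable def eRb (n : ℕ) (β : I → ℕ) (i : I) : bAlg C (n + 1) (addA β i) :=
  toB C (eR C n β i)

/-- The image of `e(α_i,β)` in `R(β+α_i)`. -/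
noncomputable def eLb (n : ℕ) (β : I → ℕ) (i : I) : bAlg C (n + 1) (addA β i) :=
  toB C (eL C n β i)

/-- The image of `e(β-α_i,α_i)` in `R(β)`. -/
noncomputable def eDb (n : ℕ) (β : I → ℕ) (i : I) : bAlg C n β :=
  toB C (eD C n β i)

/-- The image of `e(β,α_i)` in `R^Λ(β+α_i)`. -/
noncomputable def eRc (Λ : I → ℕ) (n : ℕ) (β : I → ℕ) (i : I) :
    cAlg C Λ (n + 1) (addA β i) :=
  toCB C Λ (eR C n β i)

/-- The image of `e(β-α_i,α_i)` in `R^Λ(β)`. -/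
noncomputable def eDc (Λ : I → ℕ) (n : ℕ) (β : I → ℕ) (i : I) : cAlg C Λ n β :=
  toCB C Λ (eD C n β i)

end KLR

/-!
The algebra `R(n+1)` is a free right module over `R(n) ⊗ k[x_{n+1}]` on the `n + 1` products
`τ_{n-c+1} ⋯ τ_n`, once cut by the idempotent which fixes the colour of the last strand. These
products span because the relations allow any `τ_l` and `x_a` on their left to be moved to the right
modulo shorter products. They are independent because of the polynomial representation, in which
`τ_l` acts by a Demazure operator on equal colours and by a transposition, up to a factor `Q`, on
distinct ones: the leading term of each product is an operator `T` with `T x_{n+1} = x_b T`, where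
`b` depends on the product, so that leading terms of different products lie in different eigenspaces
of right multiplication by `x_{n+1}`.

Cutting by central idempotents passes from `R(n+1)` to the blocks `R(β+α_i)`, and the automorphism
`x_a ↦ x_{n+2-a}`, `τ_l ↦ -τ_{n+1-l}` of `R(n+1)` exchanges `e(β,α_i)` with `e(α_i,β)`. Base
change along `R(β) → R^Λ(β)` then makes `K₀` and `K₁` free of rank `n + 1` over `R^Λ(β) ⊗ k[t_i]`.
-/

namespace KLR

section FreeLift

variable {k : Type} [Field k] {I : Type} {n : ℕ} {A : Type} [Ring A] [Algebra k A]
  (e : (Fin n → I) → A) (x : Fin n → A) (t : ℕ → A)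

/-- The homomorphism from the free algebra on the generators determined by `e`, `x` and `t`. -/
def freeLift : FA k I n →ₐ[k] A :=
  FreeAlgebra.lift k fun
    | .e ν => e ν
    | .x a => x a
    | .tau l _ => t l

lemma freeLift_ge (ν : Fin n → I) : freeLift e x t (ge k ν) = e ν :=
  FreeAlgebra.lift_ι_apply _ _

lemma freeLift_gx (a : Fin n) : freeLift e x t (gx k a) = x a :=
  FreeAlgebra.lift_ι_apply _ _

lemma freeLift_gt (l : ℕ) (h : l + 1 < n) : freeLift e x t (gt k l h) = t l :=
  FreeAlgebra.lift_ι_apply _ _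

end FreeLift

section Presentation

variable {k : Type} [Field k] {I : Type} [Fintype I] [DecidableEq I] {C : CartanDatum k I}

lemma map_Qel {A A' : Type} [Ring A] [Algebra k A] [Ring A'] [Algebra k A'] (f : A →ₐ[k] A')
    (i j : I) (u v : A) : f (Qel C i j u v) = Qel C i j (f u) (f v) := by
  simp only [Qel, apply_ite f, map_zero, map_sum, map_smul, map_mul, map_pow]

lemma map_Qdiff {A A' : Type} [Ring A] [Algebra k A] [Ring A'] [Algebra k A'] (f : A →ₐ[k] A')
    (i j : I) (u v w : A) : f (Qdiff C i j u v w) = Qdiff C i j (f u) (f v) (f w) := by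
  simp only [Qdiff, apply_ite f, map_zero, map_sum, map_smul, map_mul, map_pow]

variable (C) in
/-- The defining relations of `R(n)`, for elements `e`, `x`, `t` of an arbitrary algebra.  The
family `t` is indexed by all of `ℕ`, but only its entries `t l` with `l + 1 < n` are constrained. -/
structure Relations {n : ℕ} {A : Type} [Ring A] [Algebra k A] (e : (Fin n → I) → A)
    (x : Fin n → A) (t : ℕ → A) : Prop where
  idem_mul_idem : ∀ ν ν', e ν * e ν' = if ν = ν' then e ν else 0
  sum_idem : ∑ ν, e ν = 1
  x_comm : ∀ a b, Commute (x a) (x b)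
  x_idem : ∀ a ν, Commute (x a) (e ν)
  tau_idem : ∀ l (h : l + 1 < n) ν,
    t l * e ν = e (ν ∘ Equiv.swap (⟨l, Nat.lt_of_succ_lt h⟩ : Fin n) ⟨l + 1, h⟩) * t l
  tau_comm : ∀ l l', l + 1 < l' → l' + 1 < n → Commute (t l) (t l')
  tau_sq : ∀ l (h : l + 1 < n) ν,
    t l ^ 2 * e ν = Qel C (ν ⟨l, Nat.lt_of_succ_lt h⟩) (ν ⟨l + 1, h⟩)
      (x ⟨l, Nat.lt_of_succ_lt h⟩) (x ⟨l + 1, h⟩) * e ν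
  tau_x : ∀ l (h : l + 1 < n) (m : Fin n) ν,
    (t l * x m - x (Equiv.swap (⟨l, Nat.lt_of_succ_lt h⟩ : Fin n) ⟨l + 1, h⟩ m) * t l) * e ν =
      (if m = ⟨l, Nat.lt_of_succ_lt h⟩ ∧ ν ⟨l, Nat.lt_of_succ_lt h⟩ = ν ⟨l + 1, h⟩ then -1
        else if m = ⟨l + 1, h⟩ ∧ ν ⟨l, Nat.lt_of_succ_lt h⟩ = ν ⟨l + 1, h⟩ then 1
        else 0) * e ν
  braid : ∀ l (h : l + 2 < n) ν,
    (t (l + 1) * t l * t (l + 1) - t l * t (l + 1) * t l) * e ν =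
      (if ν ⟨l, Nat.lt_of_succ_lt (Nat.lt_of_succ_lt h)⟩ = ν ⟨l + 2, h⟩ then
        Qdiff C (ν ⟨l, Nat.lt_of_succ_lt (Nat.lt_of_succ_lt h)⟩) (ν ⟨l + 1, Nat.lt_of_succ_lt h⟩)
          (x ⟨l, Nat.lt_of_succ_lt (Nat.lt_of_succ_lt h)⟩) (x ⟨l + 1, Nat.lt_of_succ_lt h⟩)
          (x ⟨l + 2, h⟩)
        else 0) * e ν

namespace Relations

variable {n : ℕ} {A : Type} [Ring A] [Algebra k A] {e : (Fin n → I) → A} {x : Fin n → A}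
  {t : ℕ → A}

lemma freeLift_eq_of_rel (H : Relations C e x t) {p q : FA k I n} (hpq : Rel C n p q) :
    freeLift e x t p = freeLift e x t q := by
  induction hpq <;> simp only [map_mul, map_sub, map_pow, map_sum, map_one, map_zero, map_neg,
    map_Qel, map_Qdiff, apply_ite (freeLift e x t), freeLift_ge, freeLift_gx, freeLift_gt]
  case ee ν ν' => exact H.idem_mul_idem ν ν'
  case esum => exact H.sum_idem
  case xx a b => exact H.x_comm a b
  case xe a ν => exact H.x_idem a ν
  case taue l h ν => exact H.tau_idem l h ν
  case tautau l h l' h' hl =>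
    rcases hl with hl | hl
    · exact H.tau_comm l l' hl h'
    · exact (H.tau_comm l' l hl h).symm
  case tausq l h ν => exact H.tau_sq l h ν
  case taux l h m ν => rw [H.tau_x l h m ν]; split_ifs <;> simp
  case braid l h ν => rw [H.braid l h ν]; split_ifs <;> simp

/-- The homomorphism `R(n) → A` determined by elements of `A` satisfying the relations. -/
noncomputable def lift (H : Relations C e x t) : Alg C n →ₐ[k] A :=
  RingQuot.liftAlgHom k ⟨freeLift e x t, fun _ _ => H.freeLift_eq_of_rel⟩

@[simp] lemma lift_Ee (H : Relations C e x t) (ν : Fin n → I) : H.lift (Ee C ν) = e ν := by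
  rw [lift, Ee, RingQuot.liftAlgHom_mkAlgHom_apply, freeLift_ge]

@[simp] lemma lift_Xx (H : Relations C e x t) (a : Fin n) : H.lift (Xx C a) = x a := by
  rw [lift, Xx, RingQuot.liftAlgHom_mkAlgHom_apply, freeLift_gx]

lemma lift_Tt (H : Relations C e x t) (l : ℕ) (h : l + 1 < n) : H.lift (Tt C l h) = t l := by
  rw [lift, Tt, RingQuot.liftAlgHom_mkAlgHom_apply, freeLift_gt]

end Relations

variable (C)

/-- The generator `τ_l` of `R(n)`, extended by `0` to indices out of range. -/
noncomputable def tau (n l : ℕ) : Alg C n := if h : l + 1 < n then Tt C l h else 0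

lemma Tt_eq_tau {n : ℕ} (l : ℕ) (h : l + 1 < n) : Tt C l h = tau C n l := (dif_pos h).symm

@[simp] lemma Relations.lift_tau {C : CartanDatum k I} {n : ℕ} {A : Type} [Ring A] [Algebra k A]
    {e : (Fin n → I) → A} {x : Fin n → A} {t : ℕ → A} (H : Relations C e x t) {l : ℕ}
    (h : l + 1 < n) : H.lift (tau C n l) = t l := by
  rw [← Tt_eq_tau C l h, H.lift_Tt]

variable {C} in
lemma relations_of_rel {n : ℕ} {A : Type} [Ring A] [Algebra k A] (f : FA k I n →ₐ[k] A)
    (hf : ∀ {p q}, Rel C n p q → f p = f q) :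
    Relations C (fun ν => f (ge k ν)) (fun a => f (gx k a))
      (fun l => if h : l + 1 < n then f (gt k l h) else 0) := by
  constructor
  case idem_mul_idem =>
    intro ν ν'
    simpa only [map_mul, apply_ite f, map_zero] using hf (.ee ν ν')
  case sum_idem => simpa only [map_sum, map_one] using hf .esum
  case x_comm => intro a b; simpa only [commute_iff_eq, map_mul] using hf (.xx a b)
  case x_idem => intro a ν; simpa only [commute_iff_eq, map_mul] using hf (.xe a ν)
  case tau_idem =>
    intro l h ν
    simpa only [map_mul, dif_pos h] using hf (.taue l h ν)
  case tau_comm =>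
    intro l l' hl h'
    have h : l + 1 < n := by omega
    simpa only [commute_iff_eq, map_mul, dif_pos h, dif_pos h'] using
      hf (.tautau l h l' h' (.inl hl))
  case tau_sq =>
    intro l h ν
    simpa only [map_mul, map_pow, map_Qel, dif_pos h] using hf (.tausq l h ν)
  case tau_x =>
    intro l h m ν
    simpa only [map_mul, map_sub, map_neg, apply_ite f, map_zero, dif_pos h, ite_mul, neg_one_mul,
      one_mul, zero_mul] using hf (.taux l h m ν)
  case braid =>
    intro l h ν
    have h' : l + 1 < n := by omega
    simpa only [map_mul, map_sub, map_Qdiff, apply_ite f, map_zero, dif_pos h', dif_pos h, ite_mul,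
      zero_mul] using hf (.braid l h ν)

theorem relations_generators (n : ℕ) : Relations C (Ee C (n := n)) (Xx C) (tau C n) :=
  relations_of_rel (RingQuot.mkAlgHom k (Rel C n)) fun h => RingQuot.mkAlgHom_rel k h

variable {C}

/-- The generators `e(ν)`, `x_a` and `τ_l` of `R(n)`. -/
def generators (C : CartanDatum k I) (n : ℕ) : Set (Alg C n) :=
  Set.range (Ee C) ∪ Set.range (Xx C) ∪ tau C n '' {l | l + 1 < n}

variable (C) in
theorem adjoin_generators (n : ℕ) : Algebra.adjoin k (generators C n) = ⊤ := by
  refine top_unique ?_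
  rw [← (AlgHom.range_eq_top (RingQuot.mkAlgHom k (Rel C n))).mpr
      (RingQuot.mkAlgHom_surjective k _),
    ← Algebra.map_top, ← FreeAlgebra.adjoin_range_ι, AlgHom.map_adjoin]
  refine Algebra.adjoin_mono ?_
  rintro _ ⟨_, ⟨g | a | ⟨l, h⟩, rfl⟩, rfl⟩
  · exact .inl (.inl ⟨g, rfl⟩)
  · exact .inl (.inr ⟨a, rfl⟩)
  · exact .inr ⟨l, h, (Tt_eq_tau C l h).symm⟩

lemma mem_of_generators_subset {n : ℕ} {S : Subalgebra k (Alg C n)} (hS : generators C n ⊆ S)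
    (z : Alg C n) : z ∈ S := by
  have : Algebra.adjoin k (generators C n) ≤ S := Algebra.adjoin_le hS
  rw [adjoin_generators] at this
  exact this trivial

lemma commute_of_commute_generators {n : ℕ} {A : Type} [Ring A] [Algebra k A]
    {f : Alg C n →ₐ[k] A} {w : A} (hw : ∀ g ∈ generators C n, Commute w (f g)) (z : Alg C n) :
    Commute w (f z) := by
  have hz := mem_of_generators_subset (S := (Subalgebra.centralizer k {w}).comap f) ?_ z
  · exact Subalgebra.mem_centralizer_iff k |>.mp hz w rfl
  · exact fun g hg => Subalgebra.mem_centralizer_iff k |>.mpr fun _ h => h ▸ hw g hg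

lemma forall_generators {n : ℕ} {p : Alg C n → Prop} :
    (∀ g ∈ generators C n, p g) ↔
      (∀ ν, p (Ee C ν)) ∧ (∀ a, p (Xx C a)) ∧ ∀ l, l + 1 < n → p (tau C n l) := by
  simp only [generators, Set.union_def, Set.mem_ofPred_eq, or_imp, forall_and, Set.forall_mem_range,
    Set.forall_mem_image, and_assoc]

theorem algHom_ext {n : ℕ} {A : Type} [Ring A] [Algebra k A] {f g : Alg C n →ₐ[k] A}
    (he : ∀ ν, f (Ee C ν) = g (Ee C ν)) (hx : ∀ a, f (Xx C a) = g (Xx C a))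
    (ht : ∀ l, l + 1 < n → f (tau C n l) = g (tau C n l)) : f = g :=
  AlgHom.ext_of_adjoin_eq_top (adjoin_generators C n) (forall_generators.mpr ⟨he, hx, ht⟩)

end Presentation

variable {k : Type} [Field k] {I : Type} [Fintype I] [DecidableEq I] {C : CartanDatum k I}

section Idempotents

/-- The transposition of the adjacent positions `l` and `l + 1`. -/
abbrev adjSwap {n : ℕ} (l : ℕ) (h : l + 1 < n) : Equiv.Perm (Fin n) :=
  Equiv.swap ⟨l, Nat.lt_of_succ_lt h⟩ ⟨l + 1, h⟩

lemma adjSwap_castSucc {n : ℕ} (l : ℕ) (h : l + 1 < n) (a : Fin n) :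
    adjSwap (n := n + 1) l (Nat.lt_succ_of_lt h) a.castSucc = (adjSwap l h a).castSucc :=
  (Fin.castSucc_injective n).swap_apply ⟨l, Nat.lt_of_succ_lt h⟩ ⟨l + 1, h⟩ a

lemma init_comp_adjSwap {J : Type*} {n : ℕ} (l : ℕ) (h : l + 1 < n) (μ : Fin (n + 1) → J) :
    Fin.init (μ ∘ adjSwap (n := n + 1) l (Nat.lt_succ_of_lt h)) = Fin.init μ ∘ adjSwap l h :=
  funext fun a => congrArg μ (adjSwap_castSucc l h a)

lemma mul_sum_congr {R ι : Type*} [NonUnitalNonAssocSemiring R] {s : Finset ι} {e : ι → R}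
    {z w : R} (h : ∀ μ ∈ s, z * e μ = w * e μ) : z * ∑ μ ∈ s, e μ = w * ∑ μ ∈ s, e μ := by
  simpa only [Finset.mul_sum] using Finset.sum_congr rfl h

namespace Relations

variable {n : ℕ} {A : Type} [Ring A] [Algebra k A] {e : (Fin n → I) → A} {x : Fin n → A}
  {t : ℕ → A}

lemma sum_mul_idem (H : Relations C e x t) (s : Finset (Fin n → I)) (μ : Fin n → I) :
    (∑ ν ∈ s, e ν) * e μ = if μ ∈ s then e μ else 0 := by
  simp only [Finset.sum_mul, H.idem_mul_idem, Finset.sum_ite_eq']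

lemma idem_mul_sum (H : Relations C e x t) (s : Finset (Fin n → I)) (μ : Fin n → I) :
    e μ * ∑ ν ∈ s, e ν = if μ ∈ s then e μ else 0 := by
  simp only [Finset.mul_sum, H.idem_mul_idem, Finset.sum_ite_eq]

lemma sum_mul_sum (H : Relations C e x t) (s s' : Finset (Fin n → I)) :
    (∑ ν ∈ s, e ν) * ∑ ν ∈ s', e ν = ∑ ν ∈ s ∩ s', e ν := by
  rw [Finset.mul_sum, Finset.inter_comm, ← Finset.filter_mem_eq_inter, Finset.sum_filter]
  exact Finset.sum_congr rfl fun μ _ => H.sum_mul_idem s μ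

lemma eq_of_mul_idem (H : Relations C e x t) {z w : A} (h : ∀ μ, z * e μ = w * e μ) : z = w := by
  rw [← mul_one z, ← mul_one w, ← H.sum_idem, Finset.mul_sum, Finset.mul_sum]
  exact Finset.sum_congr rfl fun μ _ => h μ

lemma commute_x_sum (H : Relations C e x t) (a : Fin n) (s : Finset (Fin n → I)) :
    Commute (x a) (∑ ν ∈ s, e ν) :=
  Commute.sum_right _ _ _ fun ν _ => H.x_idem a ν

lemma tau_mul_sum (H : Relations C e x t) {l : ℕ} (h : l + 1 < n) {s s' : Finset (Fin n → I)}
    (hs : ∀ ν, ν ∈ s ↔ ν ∘ adjSwap l h ∈ s') :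
    t l * ∑ ν ∈ s, e ν = (∑ ν ∈ s', e ν) * t l := by
  rw [Finset.mul_sum, Finset.sum_mul]
  exact Finset.sum_equiv (Equiv.arrowCongr (adjSwap l h) (Equiv.refl I)) hs
    fun ν _ => H.tau_idem l h ν

lemma commute_tau_sum (H : Relations C e x t) {l : ℕ} (h : l + 1 < n) {s : Finset (Fin n → I)}
    (hs : ∀ ν, ν ∈ s ↔ ν ∘ adjSwap l h ∈ s) : Commute (t l) (∑ ν ∈ s, e ν) :=
  H.tau_mul_sum h hs

lemma commute_tau_x (H : Relations C e x t) {l : ℕ} (h : l + 1 < n) {a : Fin n} (ha : a.val ≠ l)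
    (ha' : a.val ≠ l + 1) : Commute (t l) (x a) := by
  have hl : a ≠ ⟨l, Nat.lt_of_succ_lt h⟩ := fun h => ha (congrArg Fin.val h)
  have hl' : a ≠ ⟨l + 1, h⟩ := fun h => ha' (congrArg Fin.val h)
  refine sub_eq_zero.mp (H.eq_of_mul_idem fun μ => ?_)
  have := H.tau_x l h a μ
  rwa [Equiv.swap_apply_of_ne_of_ne hl hl', if_neg (fun h => hl h.1), if_neg (fun h => hl' h.1)]
    at this

lemma sum_fiber_mul_sum_fiber {J : Type*} [DecidableEq J] (H : Relations C e x t)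
    (f : (Fin n → I) → J) (a b : J) :
    (∑ μ with f μ = a, e μ) * ∑ μ with f μ = b, e μ =
      if a = b then ∑ μ with f μ = a, e μ else 0 := by
  rw [H.sum_mul_sum]
  split_ifs with h
  · rw [h, Finset.inter_self]
  · rw [← Finset.filter_and, Finset.filter_eq_empty_iff.mpr, Finset.sum_empty]
    rintro μ - ⟨rfl, rfl⟩
    exact h rfl

theorem init {n : ℕ} {e : (Fin (n + 1) → I) → A} {x : Fin (n + 1) → A} {t : ℕ → A}
    (H : Relations C e x t) :
    Relations C (fun ν : Fin n → I => ∑ μ with Fin.init μ = ν, e μ) (fun a => x a.castSucc) t := by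
  have hμ {ν : Fin n → I} {μ : Fin (n + 1) → I} (h : μ ∈ Finset.univ.filter (Fin.init · = ν))
      (a : ℕ) (ha : a < n) : μ ⟨a, Nat.lt_succ_of_lt ha⟩ = ν ⟨a, ha⟩ := by
    obtain ⟨-, rfl⟩ := Finset.mem_filter.mp h
    rfl
  constructor
  case idem_mul_idem => exact H.sum_fiber_mul_sum_fiber Fin.init
  case sum_idem =>
    rw [← H.sum_idem]
    exact Finset.sum_fiberwise _ _ _
  case x_comm => exact fun a b => H.x_comm _ _
  case x_idem => exact fun a ν => H.commute_x_sum _ _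
  case tau_idem =>
    intro l h ν
    refine H.tau_mul_sum (Nat.lt_succ_of_lt h) fun μ => ?_
    rw [Finset.mem_filter_univ, Finset.mem_filter_univ, init_comp_adjSwap l h,
      (adjSwap l h).surjective.injective_comp_right.eq_iff]
  case tau_comm => exact fun l l' hl hl' => H.tau_comm l l' hl (Nat.lt_succ_of_lt hl')
  case tau_sq =>
    intro l h ν
    refine mul_sum_congr fun μ hm => ?_
    rw [H.tau_sq l (Nat.lt_succ_of_lt h), hμ hm l (by omega),
      hμ hm (l + 1) (by omega)]
    rfl
  case tau_x =>
    intro l h m ν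
    refine mul_sum_congr fun μ hm => ?_
    rw [← adjSwap_castSucc, H.tau_x l (Nat.lt_succ_of_lt h), hμ hm l (by omega),
      hμ hm (l + 1) (by omega)]
    simp only [Fin.ext_iff, Fin.val_castSucc]
  case braid =>
    intro l h ν
    refine mul_sum_congr fun μ hm => ?_
    rw [H.braid l (Nat.lt_succ_of_lt h), hμ hm l (by omega),
      hμ hm (l + 1) (by omega), hμ hm (l + 2) (by omega)]
    rfl

end Relations

variable (C)

/-- The homomorphism `R(n) → R(n + 1)` adding a strand of arbitrary colour on the right; it sends
`e(ν)` to the sum of all the `e(ν∗(i))`. -/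
noncomputable def iota (n : ℕ) : Alg C n →ₐ[k] Alg C (n + 1) :=
  (relations_generators C (n + 1)).init.lift

/-- The idempotent `e(*, α_i)` of `R(n + 1)`: the sum of all `e(μ)` with `μ_{n+1} = i`. -/
noncomputable def eps (n : ℕ) (i : I) : Alg C (n + 1) := ∑ μ with μ (Fin.last n) = i, Ee C μ

@[simp] lemma iota_Ee {n : ℕ} (ν : Fin n → I) :
    iota C n (Ee C ν) = ∑ μ with Fin.init μ = ν, Ee C μ := Relations.lift_Ee _ _

@[simp] lemma iota_Xx {n : ℕ} (a : Fin n) : iota C n (Xx C a) = Xx C a.castSucc :=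
  Relations.lift_Xx _ _

@[simp] lemma iota_tau {n l : ℕ} (h : l + 1 < n) : iota C n (tau C n l) = tau C (n + 1) l :=
  Relations.lift_tau _ h

lemma commute_eps_iota (n : ℕ) (i : I) (z : Alg C n) : Commute (eps C n i) (iota C n z) := by
  have H := relations_generators C (n + 1)
  refine commute_of_commute_generators (forall_generators.mpr ⟨fun ν => ?_, fun a => ?_,
    fun l h => ?_⟩) z
  · rw [iota_Ee, eps, commute_iff_eq, H.sum_mul_sum, H.sum_mul_sum, Finset.inter_comm]
  · rw [iota_Xx]
    exact (H.commute_x_sum _ _).symm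
  · rw [iota_tau C h]
    refine (H.commute_tau_sum (Nat.lt_succ_of_lt h) fun μ => ?_).symm
    rw [Finset.mem_filter_univ, Finset.mem_filter_univ, Function.comp_apply,
      Equiv.swap_apply_of_ne_of_ne (by simp [Fin.ext_iff]; omega) (by simp [Fin.ext_iff]; omega)]

lemma commute_x_last_iota (n : ℕ) (z : Alg C n) :
    Commute (Xx C (Fin.last n)) (iota C n z) := by
  have H := relations_generators C (n + 1)
  refine commute_of_commute_generators (forall_generators.mpr ⟨fun ν => ?_, fun a => ?_,
    fun l h => ?_⟩) z
  · rw [iota_Ee]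
    exact H.commute_x_sum _ _
  · rw [iota_Xx]
    exact H.x_comm _ _
  · rw [iota_tau C h]
    exact (H.commute_tau_x (Nat.lt_succ_of_lt h) (by simp; omega) (by simp; omega)).symm

lemma commute_x_eps (n : ℕ) (i : I) (a : Fin (n + 1)) : Commute (Xx C a) (eps C n i) :=
  (relations_generators C (n + 1)).commute_x_sum _ _

lemma eps_mul_eps (n : ℕ) (i j : I) :
    eps C n i * eps C n j = if i = j then eps C n i else 0 := by
  rw [eps, eps, (relations_generators C (n + 1)).sum_mul_sum]
  split_ifs with h
  · rw [h, Finset.inter_self]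
  · rw [← Finset.filter_and, Finset.filter_eq_empty_iff.mpr, Finset.sum_empty]
    rintro μ - ⟨rfl, rfl⟩
    exact h rfl

lemma sum_eps (n : ℕ) : ∑ i, eps C n i = 1 := by
  rw [← (relations_generators C (n + 1)).sum_idem]
  exact Finset.sum_fiberwise _ _ _

lemma Ee_eq_iota_mul_eps {n : ℕ} (μ : Fin (n + 1) → I) :
    Ee C μ = iota C n (Ee C (Fin.init μ)) * eps C n (μ (Fin.last n)) := by
  rw [iota_Ee, eps, (relations_generators C (n + 1)).sum_mul_sum, ← Finset.filter_and,
    Finset.sum_eq_single_of_mem μ (by simp)]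
  intro ν hν hne
  refine absurd (funext fun a => ?_) hne
  obtain ⟨-, h, h'⟩ := Finset.mem_filter.mp hν
  exact Fin.lastCases h' (fun a => congrFun h a) a

end Idempotents

section PolynomialCombinations

variable {k : Type*} [CommRing k] {S B : Type*} [Ring S] [Algebra k S] [Ring B] [Algebra k B]

/-- The evaluation `∑ s_p X^p ↦ ∑ φ(s_p) x^p` of polynomials over `S` along `φ : S → B`. -/
noncomputable def polyEval (φ : S →ₙₐ[k] B) (x : B) : Polynomial S →ₗ[k] B :=
  Polynomial.lsum fun p => LinearMap.mulRight k (x ^ p) ∘ₗ (φ : S →ₗ[k] B)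

/-- The map `f ↦ ∑ v_a f_a(x)` which assembles elements of `B` from polynomial coefficients. -/
noncomputable def polyComb (φ : S →ₙₐ[k] B) (x : B) {m : ℕ} (v : Fin m → B) :
    (Fin m → Polynomial S) →ₗ[k] B :=
  ∑ a, LinearMap.mulLeft k (v a) ∘ₗ polyEval φ x ∘ₗ LinearMap.proj a

variable (φ : S →ₙₐ[k] B) (x : B)

lemma polyEval_eq_sum (f : Polynomial S) : polyEval φ x f = f.sum fun p s => φ s * x ^ p := rfl

@[simp] lemma polyEval_monomial (p : ℕ) (s : S) :
    polyEval φ x (Polynomial.monomial p s) = φ s * x ^ p := by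
  rw [polyEval_eq_sum, Polynomial.sum_monomial_index _ _ (by rw [map_zero, zero_mul])]

lemma polyComb_apply {m : ℕ} (v : Fin m → B) (f : Fin m → Polynomial S) :
    polyComb φ x v f = ∑ a, v a * polyEval φ x (f a) := by
  simp only [polyComb, LinearMap.sum_apply, LinearMap.comp_apply, LinearMap.proj_apply,
    LinearMap.mulLeft_apply]

lemma polyComb_single {m : ℕ} (v : Fin m → B) (a : Fin m) (f : Polynomial S) :
    polyComb φ x v (Pi.single a f) = v a * polyEval φ x f := by
  rw [polyComb_apply, Finset.sum_eq_single a, Pi.single_eq_same]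
  · intro b _ hb
    rw [Pi.single_eq_of_ne hb, map_zero, mul_zero]
  · exact fun ha => absurd (Finset.mem_univ a) ha

variable {φ x} in
lemma commute_polyEval (hx : ∀ s, Commute (φ s) x) (f : Polynomial S) :
    Commute (polyEval φ x f) x := by
  rw [polyEval_eq_sum]
  exact Commute.sum_left _ _ _ fun p _ => (hx _).mul_left ((Commute.refl x).pow_left p)

/-- The subalgebra of the elements whose left multiplication preserves `N`. -/
def leftStabilizer (N : Submodule k B) : Subalgebra k B where
  carrier := {y | ∀ z ∈ N, y * z ∈ N}
  mul_mem' {a b} ha hb z hz := by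
    rw [mul_assoc]
    exact ha _ (hb z hz)
  add_mem' {a b} ha hb z hz := by
    rw [add_mul]
    exact N.add_mem (ha z hz) (hb z hz)
  algebraMap_mem' r z hz := by
    rw [← Algebra.smul_def]
    exact N.smul_mem r hz

variable {φ x}

lemma mem_leftStabilizer_range_polyEval {y : B}
    (hy : ∀ s p, y * (φ s * x ^ p) ∈ LinearMap.range (polyEval φ x)) :
    y ∈ leftStabilizer (LinearMap.range (polyEval φ x)) := by
  rintro _ ⟨f, rfl⟩
  induction f using Polynomial.induction_on' with
  | add f g hf hg =>
    rw [map_add, mul_add]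
    exact add_mem hf hg
  | monomial p s =>
    rw [polyEval_monomial]
    exact hy s p

end PolynomialCombinations

section Spanning

variable {k : Type} [Field k] {I : Type} [Fintype I] [DecidableEq I] {C : CartanDatum k I}

lemma Qel_mem {A : Type} [Ring A] [Algebra k A] (S : Subalgebra k A) (i j : I) {u v : A}
    (hu : u ∈ S) (hv : v ∈ S) : Qel C i j u v ∈ S := by
  have h := map_Qel (C := C) S.val i j ⟨u, hu⟩ ⟨v, hv⟩
  simp only [Subalgebra.coe_val] at h
  exact h ▸ Subtype.property _

lemma Qdiff_mem {A : Type} [Ring A] [Algebra k A] (S : Subalgebra k A) (i j : I) {u v w : A}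
    (hu : u ∈ S) (hv : v ∈ S) (hw : w ∈ S) : Qdiff C i j u v w ∈ S := by
  have h := map_Qdiff (C := C) S.val i j ⟨u, hu⟩ ⟨v, hv⟩ ⟨w, hw⟩
  simp only [Subalgebra.coe_val] at h
  exact h ▸ Subtype.property _

variable (k) in
/-- The subalgebra generated by the elements `e(ν)` and `x_a`. -/
def diagonalSubalgebra {J J' A : Type} [Ring A] [Algebra k A] (e : J → A) (x : J' → A) :
    Subalgebra k A :=
  Algebra.adjoin k (Set.range e ∪ Set.range x)

lemma idem_mem_diagonal {J J' A : Type} [Ring A] [Algebra k A] {e : J → A} {x : J' → A} (ν : J) :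
    e ν ∈ diagonalSubalgebra k e x :=
  Algebra.subset_adjoin (.inl ⟨ν, rfl⟩)

lemma x_mem_diagonal {J J' A : Type} [Ring A] [Algebra k A] {e : J → A} {x : J' → A} (a : J') :
    x a ∈ diagonalSubalgebra k e x :=
  Algebra.subset_adjoin (.inr ⟨a, rfl⟩)

/-- The product `τ_{n-c+1} ⋯ τ_{n-1} τ_n` (in 1-based numbering) of the last `c` generators `τ`;
it corresponds to the minimal coset representatives of `S_n` in `S_{n+1}`. -/
def cosetRep {A : Type} [Ring A] (t : ℕ → A) (n : ℕ) : ℕ → A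
  | 0 => 1
  | c + 1 => t (n - 1 - c) * cosetRep t n c

/-- The span of the cosets `v_c P`, for `c ≤ m` and the coset representatives `v_c`. -/
def cosetSpan {A : Type} [Ring A] [Algebra k A] (P : Subalgebra k A) (t : ℕ → A) (n m : ℕ) :
    Submodule k A :=
  Submodule.span k {z | ∃ c ≤ m, ∃ h ∈ P, z = cosetRep t n c * h}

namespace Relations

section

variable {n : ℕ} {A : Type} [Ring A] [Algebra k A] {e : (Fin n → I) → A} {x : Fin n → A}
  {t : ℕ → A}

lemma mem_of_mul_idem_mem (H : Relations C e x t) {S : Subalgebra k A} {z : A}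
    (h : ∀ ν, z * e ν ∈ S) : z ∈ S := by
  rw [← mul_one z, ← H.sum_idem, Finset.mul_sum]
  exact S.sum_mem fun ν _ => h ν

lemma tau_mul_tau_mem (H : Relations C e x t) {l : ℕ} (h : l + 1 < n) :
    t l * t l ∈ diagonalSubalgebra k e x := by
  refine H.mem_of_mul_idem_mem fun ν => ?_
  rw [← pow_two, H.tau_sq l h]
  exact mul_mem (Qel_mem _ _ _ (x_mem_diagonal _) (x_mem_diagonal _)) (idem_mem_diagonal ν)

lemma tau_mul_x_sub_mem (H : Relations C e x t) {l : ℕ} (h : l + 1 < n) (a : Fin n) :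
    t l * x a - x (adjSwap l h a) * t l ∈ diagonalSubalgebra k e x := by
  refine H.mem_of_mul_idem_mem fun ν => ?_
  rw [H.tau_x l h]
  refine mul_mem ?_ (idem_mem_diagonal ν)
  split_ifs
  exacts [neg_mem (one_mem _), one_mem _, zero_mem _]

lemma braid_sub_mem (H : Relations C e x t) {l : ℕ} (h : l + 2 < n) :
    t (l + 1) * t l * t (l + 1) - t l * t (l + 1) * t l ∈ diagonalSubalgebra k e x := by
  refine H.mem_of_mul_idem_mem fun ν => ?_
  rw [H.braid l h]
  refine mul_mem ?_ (idem_mem_diagonal ν)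
  split_ifs
  exacts [Qdiff_mem _ _ _ (x_mem_diagonal _) (x_mem_diagonal _) (x_mem_diagonal _), zero_mem _]

lemma exists_diagonal_mul_tau_eq (H : Relations C e x t) {l : ℕ} (h : l + 1 < n) {p : A}
    (hp : p ∈ diagonalSubalgebra k e x) :
    ∃ q ∈ diagonalSubalgebra k e x, ∃ r ∈ diagonalSubalgebra k e x, p * t l = t l * q + r := by
  induction hp using Algebra.adjoin_induction with
  | mem p hp =>
    rcases hp with ⟨ν, rfl⟩ | ⟨a, rfl⟩
    · refine ⟨e (ν ∘ adjSwap l h), idem_mem_diagonal _, 0, zero_mem _, ?_⟩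
      have hν : (ν ∘ adjSwap l h) ∘ adjSwap l h = ν :=
        funext fun a => congrArg ν (Equiv.swap_apply_self _ _ a)
      rw [H.tau_idem l h, hν, add_zero]
    · refine ⟨x (adjSwap l h a), x_mem_diagonal _, _,
        neg_mem (H.tau_mul_x_sub_mem h (adjSwap l h a)), ?_⟩
      rw [Equiv.swap_apply_self]
      abel
  | algebraMap r =>
    exact ⟨_, algebraMap_mem _ r, 0, zero_mem _, by rw [add_zero, Algebra.commutes]⟩
  | add p p' _ _ ih ih' =>
    obtain ⟨q, hq, r, hr, h⟩ := ih
    obtain ⟨q', hq', r', hr', h'⟩ := ih'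
    exact ⟨q + q', add_mem hq hq', r + r', add_mem hr hr', by rw [add_mul, h, h']; noncomm_ring⟩
  | mul p p' hp _ ih ih' =>
    obtain ⟨q, hq, r, hr, h⟩ := ih
    obtain ⟨q', hq', r', hr', h'⟩ := ih'
    refine ⟨q * q', mul_mem hq hq', r * q' + p * r', add_mem (mul_mem hr hq') (mul_mem hp hr'), ?_⟩
    rw [mul_assoc, h', mul_add, ← mul_assoc, h]
    noncomm_ring

end

variable {n : ℕ} {A : Type} [Ring A] [Algebra k A] {e : (Fin (n + 1) → I) → A}
  {x : Fin (n + 1) → A} {t : ℕ → A} {P : Subalgebra k A}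

lemma commute_tau_cosetRep (H : Relations C e x t) {c j : ℕ} (h : j + 1 + c < n) :
    Commute (t j) (cosetRep t n c) := by
  induction c with
  | zero => exact Commute.one_right _
  | succ c ih => exact (H.tau_comm j _ (by omega) (by omega)).mul_right (ih (by omega))

lemma cosetSpan_mono {m m' : ℕ} (h : m ≤ m') : cosetSpan P t n m ≤ cosetSpan P t n m' :=
  Submodule.span_mono fun _ ⟨c, hc, hz⟩ => ⟨c, hc.trans h, hz⟩

lemma cosetRep_mul_mem {c m : ℕ} (hc : c ≤ m) {h : A} (hh : h ∈ P) :
    cosetRep t n c * h ∈ cosetSpan P t n m :=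
  Submodule.subset_span ⟨c, hc, h, hh, rfl⟩

lemma mul_mem_of_mul_cosetRep_mem {m : ℕ} {N : Submodule k A} {y : A}
    (hy : ∀ c ≤ m, ∀ h ∈ P, y * (cosetRep t n c * h) ∈ N) {z : A} (hz : z ∈ cosetSpan P t n m) :
    y * z ∈ N := by
  suffices cosetSpan P t n m ≤ N.comap (LinearMap.mulLeft k y) from this hz
  refine Submodule.span_le.mpr ?_
  rintro _ ⟨c, hc, h, hh, rfl⟩
  exact hy c hc h hh

lemma tau_mul_mem_cosetSpan_succ (H : Relations C e x t) (ht : ∀ l, l + 1 < n → t l ∈ P) {m : ℕ}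
    (hm : m < n) {z : A} (hz : z ∈ cosetSpan P t n m) :
    t (n - 1 - m) * z ∈ cosetSpan P t n (m + 1) := by
  refine mul_mem_of_mul_cosetRep_mem (fun c hc h hh => ?_) hz
  rcases hc.lt_or_eq with hc | rfl
  · rw [← mul_assoc, (H.commute_tau_cosetRep (by omega)).eq, mul_assoc]
    exact cosetRep_mul_mem (by omega) (mul_mem (ht _ (by omega)) hh)
  · rw [← mul_assoc]
    exact cosetRep_mul_mem (c := c + 1) le_rfl hh

lemma diagonal_mul_mem_cosetSpan (H : Relations C e x t) (hP : diagonalSubalgebra k e x ≤ P)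
    (ht : ∀ l, l + 1 < n → t l ∈ P) {m : ℕ} (hm : m ≤ n) {p : A}
    (hp : p ∈ diagonalSubalgebra k e x) {z : A} (hz : z ∈ cosetSpan P t n m) :
    p * z ∈ cosetSpan P t n m := by
  induction m generalizing p z with
  | zero =>
    refine mul_mem_of_mul_cosetRep_mem (fun c hc h hh => ?_) hz
    obtain rfl := Nat.le_zero.mp hc
    have := cosetRep_mul_mem (t := t) (n := n) (Nat.zero_le 0) (mul_mem (hP hp) hh)
    rwa [cosetRep, one_mul] at this ⊢
  | succ m ih =>
    refine mul_mem_of_mul_cosetRep_mem (fun c hc h hh => ?_) hz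
    rcases hc.lt_or_eq with hc | rfl
    · exact cosetSpan_mono (Nat.le_succ m)
        (ih (by omega) hp (cosetRep_mul_mem (Nat.lt_succ_iff.mp hc) hh))
    · obtain ⟨q, hq, r, hr, hpt⟩ := H.exists_diagonal_mul_tau_eq (l := n - 1 - m) (by omega) hp
      have hv : cosetRep t n m * h ∈ cosetSpan P t n m := cosetRep_mul_mem le_rfl hh
      rw [cosetRep, mul_assoc, ← mul_assoc, hpt, add_mul, mul_assoc]
      exact add_mem (H.tau_mul_mem_cosetSpan_succ ht hm (ih (by omega) hq hv))
        (cosetSpan_mono (Nat.le_succ m) (ih (by omega) hr hv))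

lemma tau_mul_cosetRep_add_two (H : Relations C e x t) {a m : ℕ} (ha : n = a + m + 2) :
    t (a + 1) * cosetRep t n (m + 2) =
      (t (a + 1) * t a * t (a + 1) - t a * t (a + 1) * t a) * cosetRep t n m +
        t a * (cosetRep t n (m + 1) * t a) := by
  have h₁ : n - 1 - (m + 1) = a := by omega
  have h₂ : n - 1 - m = a + 1 := by omega
  have hv : t a * cosetRep t n m = cosetRep t n m * t a := H.commute_tau_cosetRep (by omega)
  rw [cosetRep, cosetRep, h₁, h₂, mul_assoc (t (a + 1)) _ (t a), ← hv]
  noncomm_ring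

lemma tau_mul_mem_cosetSpan (H : Relations C e x t) (hP : diagonalSubalgebra k e x ≤ P)
    (ht : ∀ l, l + 1 < n → t l ∈ P) {m : ℕ} (hm : m ≤ n) {b : ℕ} (hb : n ≤ b + m) (hbn : b < n)
    {z : A} (hz : z ∈ cosetSpan P t n m) : t b * z ∈ cosetSpan P t n m := by
  induction m generalizing b z with
  | zero => omega
  | succ m ih =>
    refine mul_mem_of_mul_cosetRep_mem (fun c hc h hh => ?_) hz
    rcases hc.lt_or_eq with hc | rfl
    · have hv : cosetRep t n c * h ∈ cosetSpan P t n m :=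
        cosetRep_mul_mem (Nat.lt_succ_iff.mp hc) hh
      rcases Nat.lt_or_ge b (n - m) with hbm | hbm
      · obtain rfl : b = n - 1 - m := by omega
        exact H.tau_mul_mem_cosetSpan_succ ht hm hv
      · exact cosetSpan_mono (Nat.le_succ m) (ih (by omega) (by omega) hbn hv)
    · have hv : cosetRep t n m * h ∈ cosetSpan P t n m := cosetRep_mul_mem le_rfl hh
      rcases Nat.lt_trichotomy b (n - m) with hbm | hbm | hbm
      · obtain rfl : b = n - 1 - m := by omega
        rw [cosetRep, mul_assoc, ← mul_assoc]
        exact H.diagonal_mul_mem_cosetSpan hP ht hm (H.tau_mul_tau_mem (by omega))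
          (cosetSpan_mono (Nat.le_succ m) hv)
      · obtain ⟨m, rfl⟩ : ∃ m', m = m' + 1 := ⟨m - 1, by omega⟩
        obtain ⟨a, rfl⟩ : ∃ a, b = a + 1 := ⟨b - 1, by omega⟩
        rw [← mul_assoc, H.tau_mul_cosetRep_add_two (by omega), add_mul,
          mul_assoc _ (cosetRep t n m), mul_assoc (t a) _ h, mul_assoc (cosetRep t n _)]
        obtain rfl : a = n - 1 - (m + 1) := by omega
        exact add_mem (H.diagonal_mul_mem_cosetSpan hP ht hm (H.braid_sub_mem (by omega))
          (cosetRep_mul_mem (by omega) hh))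
          (H.tau_mul_mem_cosetSpan_succ ht hm (cosetRep_mul_mem le_rfl
            (mul_mem (ht _ (by omega)) hh)))
      · rw [cosetRep, mul_assoc, ← mul_assoc, ← (H.tau_comm _ b (by omega) (by omega)).eq,
          mul_assoc]
        exact H.tau_mul_mem_cosetSpan_succ ht hm (ih (by omega) (by omega) hbn hv)

end Relations

variable (C)

theorem cosetSpan_eq_top {n : ℕ} {P : Subalgebra k (Alg C (n + 1))} (he : ∀ ν, Ee C ν ∈ P)
    (hx : ∀ a, Xx C a ∈ P) (ht : ∀ l, l + 1 < n → tau C (n + 1) l ∈ P) :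
    cosetSpan P (tau C (n + 1)) n n = ⊤ := by
  have H := relations_generators C (n + 1)
  have hP : diagonalSubalgebra k (Ee C) (Xx C) ≤ P :=
    Algebra.adjoin_le (Set.union_subset (Set.range_subset_iff.mpr he) (Set.range_subset_iff.mpr hx))
  have hstab (z) : z ∈ leftStabilizer (cosetSpan P (tau C (n + 1)) n n) :=
    mem_of_generators_subset (forall_generators (p := (· ∈ leftStabilizer _)).mpr
      ⟨fun ν z => H.diagonal_mul_mem_cosetSpan hP ht le_rfl (idem_mem_diagonal ν),
        fun a z => H.diagonal_mul_mem_cosetSpan hP ht le_rfl (x_mem_diagonal a),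
        fun l hl z => H.tau_mul_mem_cosetSpan hP ht le_rfl (Nat.le_add_left _ _)
          (Nat.lt_of_succ_lt_succ hl)⟩) z
  refine Submodule.eq_top_iff'.mpr fun z => ?_
  have h1 := Relations.cosetRep_mul_mem (t := tau C (n + 1)) (n := n) (Nat.zero_le n) P.one_mem
  rw [cosetRep, one_mul] at h1
  simpa only [mul_one] using hstab z 1 h1

/-- The non-unital homomorphism `R(n) → R(n + 1)` adding a strand of colour `i` on the right. -/
noncomputable def addStrand (n : ℕ) (i : I) : Alg C n →ₙₐ[k] Alg C (n + 1) where
  toFun s := iota C n s * eps C n i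
  map_smul' c s := by rw [map_smul, smul_mul_assoc]; rfl
  map_zero' := by rw [map_zero, zero_mul]
  map_add' s s' := by rw [map_add, add_mul]
  map_mul' s s' := by
    rw [map_mul, mul_assoc, mul_assoc, ← mul_assoc (eps C n i), (commute_eps_iota C n i s').eq,
      mul_assoc, eps_mul_eps, if_pos rfl]

lemma addStrand_apply (n : ℕ) (i : I) (s : Alg C n) :
    addStrand C n i s = iota C n s * eps C n i := rfl

lemma addStrand_one (n : ℕ) (i : I) : addStrand C n i 1 = eps C n i := by
  rw [addStrand_apply, map_one, one_mul]

lemma commute_addStrand_x_last (n : ℕ) (i : I) (s : Alg C n) :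
    Commute (addStrand C n i s) (Xx C (Fin.last n)) :=
  (commute_x_last_iota C n s).symm.mul_left (commute_x_eps C n i _).symm

lemma addStrand_mul_pow_mem_range (n : ℕ) (i : I) (s : Alg C n) (p : ℕ) :
    addStrand C n i s * Xx C (Fin.last n) ^ p ∈
      LinearMap.range (polyEval (addStrand C n i) (Xx C (Fin.last n))) :=
  ⟨Polynomial.monomial p s, polyEval_monomial _ _ _ _⟩

lemma cosetSpan_leftStabilizer_eq_top (n : ℕ) (i : I) :
    cosetSpan (leftStabilizer (LinearMap.range (polyEval (addStrand C n i) (Xx C (Fin.last n)))))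
      (tau C (n + 1)) n n = ⊤ := by
  set N := LinearMap.range (polyEval (addStrand C n i) (Xx C (Fin.last n)))
  have hmem : ∀ s p, addStrand C n i s * Xx C (Fin.last n) ^ p ∈ N :=
    addStrand_mul_pow_mem_range C n i
  have hiota (r) : iota C n r ∈ leftStabilizer N := by
    refine mem_leftStabilizer_range_polyEval fun s p => ?_
    rw [addStrand_apply, ← mul_assoc, ← mul_assoc, ← map_mul, ← addStrand_apply]
    exact hmem _ _
  have heps (j) : eps C n j ∈ leftStabilizer N := by
    refine mem_leftStabilizer_range_polyEval fun s p => ?_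
    rw [addStrand_apply, ← mul_assoc, ← mul_assoc, (commute_eps_iota C n j s).eq,
      mul_assoc (iota C n s), eps_mul_eps]
    split_ifs with h
    · rw [h, ← addStrand_apply]
      exact hmem _ _
    · rw [mul_zero, zero_mul]
      exact zero_mem _
  have hx_last : Xx C (Fin.last n) ∈ leftStabilizer N := by
    refine mem_leftStabilizer_range_polyEval fun s p => ?_
    rw [← mul_assoc, ← (commute_addStrand_x_last C n i s).eq, mul_assoc, ← pow_succ']
    exact hmem _ _
  have hx (a) : Xx C a ∈ leftStabilizer N :=
    Fin.lastCases hx_last (fun a => iota_Xx C a ▸ hiota _) a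
  refine cosetSpan_eq_top C (fun ν => ?_) hx fun l hl => ?_
  · rw [Ee_eq_iota_mul_eps]
    exact mul_mem (hiota _) (heps _)
  · rw [← iota_tau C hl]
    exact hiota _

theorem mul_eps_mem_range_polyComb (n : ℕ) (i : I) (z : Alg C (n + 1)) :
    z * eps C n i ∈ LinearMap.range (polyComb (addStrand C n i) (Xx C (Fin.last n))
      fun c : Fin (n + 1) => cosetRep (tau C (n + 1)) n c) := by
  suffices ⊤ ≤ Submodule.comap (LinearMap.mulRight k (eps C n i)) (LinearMap.range _) from
    this (Submodule.mem_top (x := z))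
  rw [← cosetSpan_leftStabilizer_eq_top C n i, cosetSpan, Submodule.span_le]
  rintro _ ⟨c, hc, h, hh, rfl⟩
  have h1 := addStrand_mul_pow_mem_range C n i 1 0
  rw [addStrand_one, pow_zero, mul_one] at h1
  obtain ⟨f, hf⟩ := hh (eps C n i) h1
  exact ⟨Pi.single ⟨c, Nat.lt_succ_of_le hc⟩ f, by
    rw [polyComb_single, hf, LinearMap.mulRight_apply, mul_assoc]⟩

end Spanning

variable {k : Type} [Field k] {I : Type} [Fintype I] [DecidableEq I] {C : CartanDatum k I}

section QPolynomials

variable {A : Type} [Ring A] [Algebra k A]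

lemma Qel_self (i : I) (u v : A) : Qel C i i u v = 0 := if_pos rfl

lemma Qel_symm (i j : I) {u v : A} (huv : Commute u v) : Qel C i j u v = Qel C j i v u := by
  unfold Qel
  by_cases hij : i = j
  · rw [if_pos hij, if_pos hij.symm]
  · rw [if_neg hij, if_neg (Ne.symm hij), Finset.sum_comm]
    refine Finset.sum_congr rfl fun q _ => Finset.sum_congr rfl fun p _ => ?_
    rw [C.symmetrize i j, add_comm, C.t_symm i j p q, (huv.pow_pow p q).eq]

lemma Qdiff_symm (i j : I) {u w : A} (v : A) (huw : Commute u w) :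
    Qdiff C i j u v w = Qdiff C i j w v u := by
  simp only [Qdiff, huw.geom_sum₂_comm]

lemma Qdiff_mul_sub {K : Type} [CommRing K] [Algebra k K] (i j : I) (u v w : K) :
    Qdiff C i j u v w * (u - w) = Qel C i j u v - Qel C i j w v := by
  unfold Qdiff Qel
  split_ifs
  · simp only [zero_mul, sub_zero]
  · rw [Finset.sum_mul, ← Finset.sum_sub_distrib]
    refine Finset.sum_congr rfl fun p _ => ?_
    rw [Finset.sum_mul, ← Finset.sum_sub_distrib]
    refine Finset.sum_congr rfl fun q _ => ?_
    split_ifs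
    · rw [← smul_sub, ← sub_mul, ← geom_sum₂_mul, smul_mul_assoc, mul_right_comm]
    · simp only [zero_mul, sub_zero]

lemma Qel_zero_right {i j : I} (hij : i ≠ j) (u : A) :
    Qel C i j u 0 = C.t i j (-(C.a i j)).toNat 0 • u ^ (-(C.a i j)).toNat := by
  have hcast : ((-(C.a i j)).toNat : ℤ) = -(C.a i j) :=
    Int.toNat_of_nonneg (neg_nonneg.mpr (C.a_nonpos i j hij))
  have hexp (p : ℕ) : C.d i * (p : ℤ) = -(C.d i * C.a i j) ↔ p = (-(C.a i j)).toNat := by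
    rw [← mul_neg, mul_right_inj' (C.d_pos i).ne']
    omega
  have hinner (p : ℕ) :
      (∑ q ∈ Finset.range ((-(C.a j i)).toNat + 1),
        if C.d i * (p : ℤ) + C.d j * (q : ℤ) = -(C.d i * C.a i j) then
          C.t i j p q • (u ^ p * (0 : A) ^ q) else 0) =
        if p = (-(C.a i j)).toNat then C.t i j p 0 • u ^ p else 0 := by
    rw [Finset.sum_eq_single_of_mem 0 (Finset.mem_range.mpr (Nat.succ_pos _))]
    · simp only [Nat.cast_zero, mul_zero, add_zero, hexp, pow_zero, mul_one]
    · intro q _ hq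
      rw [zero_pow hq, mul_zero, smul_zero, ite_self]
  rw [Qel, if_neg hij]
  simp only [hinner, Finset.sum_ite_eq', Finset.mem_range.mpr (Nat.lt_succ_self _), if_true]

lemma Qel_X_ne_zero {i j : I} (hij : i ≠ j) {σ : Type} {a b : σ} (hab : a ≠ b) :
    Qel C i j (MvPolynomial.X a : MvPolynomial σ k) (MvPolynomial.X b) ≠ 0 := by
  classical
  intro h
  have h' := congrArg (MvPolynomial.aeval (Pi.single a (1 : k))) h
  rw [map_Qel, MvPolynomial.aeval_X, MvPolynomial.aeval_X, Pi.single_eq_same,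
    Pi.single_eq_of_ne hab.symm, Qel_zero_right hij, one_pow, map_zero, smul_eq_mul, mul_one] at h'
  exact C.t_lead i j hij h'

end QPolynomials

section RationalFunctions

variable (k) in
/-- The field of rational functions in countably many variables over `k`. -/
abbrev RatFun : Type := FractionRing (MvPolynomial ℕ k)

namespace RatFun

variable (k) in
/-- The `a`-th variable of `RatFun k`. -/
noncomputable def var (a : ℕ) : RatFun k := algebraMap (MvPolynomial ℕ k) _ (MvPolynomial.X a)

lemma var_injective : Function.Injective (var k) :=
  (IsFractionRing.injective (MvPolynomial ℕ k) (RatFun k)).comp MvPolynomial.X_injective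

lemma Qel_var_ne_zero {i j : I} (hij : i ≠ j) {a b : ℕ} (hab : a ≠ b) :
    Qel C i j (var k a) (var k b) ≠ 0 := by
  have h := map_Qel (C := C) (IsScalarTower.toAlgHom k (MvPolynomial ℕ k) (RatFun k)) i j
    (MvPolynomial.X a) (MvPolynomial.X b)
  exact fun h0 => Qel_X_ne_zero hij hab <|
    IsFractionRing.injective (MvPolynomial ℕ k) (RatFun k) <| (h.trans h0).trans (map_zero _).symm

lemma algHom_ext_var {A : Type} [CommRing A] [Algebra k A] {f g : RatFun k →ₐ[k] A}
    (h : ∀ a, f (var k a) = g (var k a)) : f = g :=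
  IsLocalization.algHom_ext (nonZeroDivisors (MvPolynomial ℕ k)) (MvPolynomial.algHom_ext h)

variable (k) in
/-- The endomorphism of `RatFun k` permuting the variables by `σ`. -/
noncomputable def permuteVars (σ : Equiv.Perm ℕ) : RatFun k →ₐ[k] RatFun k :=
  IsFractionRing.algEquivOfAlgEquiv (K := RatFun k) (L := RatFun k) (MvPolynomial.renameEquiv k σ)

@[simp] lemma permuteVars_var (σ : Equiv.Perm ℕ) (a : ℕ) :
    permuteVars k σ (var k a) = var k (σ a) := by
  refine (IsFractionRing.algEquivOfAlgEquiv_algebraMap (MvPolynomial.renameEquiv k σ) _).trans ?_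
  exact congrArg (algebraMap (MvPolynomial ℕ k) (RatFun k)) (MvPolynomial.rename_X σ a)

lemma permuteVars_one : permuteVars k 1 = AlgHom.id k (RatFun k) :=
  algHom_ext_var fun a => permuteVars_var 1 a

lemma permuteVars_mul (σ τ : Equiv.Perm ℕ) :
    permuteVars k (σ * τ) = (permuteVars k σ).comp (permuteVars k τ) :=
  algHom_ext_var fun a => by
    simp only [AlgHom.comp_apply, permuteVars_var, Equiv.Perm.mul_apply]

end RatFun

end RationalFunctions

section Demazure

open RatFun

variable {k : Type} [Field k] {I : Type}

variable (k I) in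
/-- The space underlying the faithful representations of the algebras `R(n)`: families of rational
functions indexed by infinite sequences in `I`.  The algebra `R(n)` only sees the first `n` entries
of the sequences and the first `n` variables, so that all `R(n)` act on the same space. -/
abbrev RepSpace : Type := (ℕ → I) → RatFun k

namespace RepSpace

/-- The simultaneous permutation of the variables and of the entries of the sequences. -/
noncomputable def permute (σ : Equiv.Perm ℕ) : RepSpace k I →ₐ[k] RepSpace k I :=
  AlgHom.pi fun ν => (permuteVars k σ).comp (Pi.evalAlgHom k _ (ν ∘ σ))

lemma permute_apply (σ : Equiv.Perm ℕ) (g : RepSpace k I) (ν : ℕ → I) :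
    permute σ g ν = permuteVars k σ (g (ν ∘ σ)) := rfl

lemma permute_one (g : RepSpace k I) : permute 1 g = g :=
  funext fun ν => by rw [permute_apply, permuteVars_one, Equiv.Perm.coe_one, Function.comp_id,
    AlgHom.id_apply]

lemma permute_mul (σ τ : Equiv.Perm ℕ) (g : RepSpace k I) :
    permute (σ * τ) g = permute σ (permute τ g) :=
  funext fun ν => by
    simp only [permute_apply, permuteVars_mul, AlgHom.comp_apply, Equiv.Perm.coe_mul,
      Function.comp_assoc]

lemma permute_swap_permute_swap (a b : ℕ) (g : RepSpace k I) :
    permute (Equiv.swap a b) (permute (Equiv.swap a b) g) = g := by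
  rw [← permute_mul, Equiv.swap_mul_self, permute_one]

/-- Multiplication by the variable `x_a`, as an element of the algebra `RepSpace k I`. -/
noncomputable def varFun (a : ℕ) : RepSpace k I := fun _ => var k a

@[simp] lemma permute_varFun (σ : Equiv.Perm ℕ) (a : ℕ) :
    permute σ (varFun a : RepSpace k I) = varFun (σ a) :=
  funext fun _ => permuteVars_var σ a

variable [DecidableEq I]

/-- The coefficient of the identity in the Demazure operator exchanging `a` and `b`. -/
noncomputable def poleFun (a b : ℕ) : RepSpace k I :=
  fun ν => if ν a = ν b then -(var k a - var k b)⁻¹ else 0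

@[simp] lemma permute_poleFun (σ : Equiv.Perm ℕ) (a b : ℕ) :
    permute σ (poleFun a b : RepSpace k I) = poleFun (σ a) (σ b) :=
  funext fun ν => by
    simp only [permute_apply, poleFun, Function.comp_apply, apply_ite (permuteVars k σ), map_neg,
      map_inv₀, map_sub, permuteVars_var, map_zero]

lemma poleFun_swap (a b : ℕ) : (poleFun b a : RepSpace k I) = -poleFun a b :=
  funext fun ν => by
    simp only [poleFun, Pi.neg_apply, eq_comm (a := ν b), ← neg_sub (var k a), inv_neg]
    split_ifs <;> simp

lemma poleFun_mul_sub {a b : ℕ} (hab : a ≠ b) (ν : ℕ → I) :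
    poleFun a b ν * (var k a - var k b) = if ν a = ν b then -1 else 0 := by
  have h : var k a - var k b ≠ 0 := sub_ne_zero.mpr (var_injective.ne hab)
  unfold poleFun
  split_ifs
  · rw [neg_mul, inv_mul_cancel₀ h]
  · rw [zero_mul]

lemma poleFun_mul_poleFun {a b c : ℕ} (hab : a ≠ b) (hbc : b ≠ c) (hac : a ≠ c) :
    (poleFun a b * poleFun b c : RepSpace k I) =
      poleFun a c * (poleFun a b + poleFun b c) :=
  funext fun ν => by
    have h₁ : var k a - var k b ≠ 0 := sub_ne_zero.mpr (var_injective.ne hab)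
    have h₂ : var k b - var k c ≠ 0 := sub_ne_zero.mpr (var_injective.ne hbc)
    have h₃ : var k a - var k c ≠ 0 := sub_ne_zero.mpr (var_injective.ne hac)
    simp only [Pi.mul_apply, Pi.add_apply, poleFun]
    split_ifs with hνab hνbc hνac hνac hνac hνbc hνbc
    · field_simp
      ring
    all_goals simp_all

variable [Fintype I] {C : CartanDatum k I}

variable (C) in
/-- The function with value `Q_{ν_a,ν_b}(x_a, x_b)` at `ν`. -/
noncomputable def qFun (a b : ℕ) : RepSpace k I := fun ν => Qel C (ν a) (ν b) (var k a) (var k b)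

open Classical in
variable (C) in
/-- The coefficient of the transposition in the Demazure operator exchanging `a` and `b`.  An
auxiliary total order on `I` distributes the factor `Q_{ij}` over the two crossings of `i` and
`j`. -/
noncomputable def crossFun (a b : ℕ) : RepSpace k I := fun ν =>
  if ν a = ν b then (var k a - var k b)⁻¹
  else if WellOrderingRel (ν a) (ν b) then Qel C (ν a) (ν b) (var k a) (var k b) else 1

@[simp] lemma permute_crossFun (σ : Equiv.Perm ℕ) (a b : ℕ) :
    permute σ (crossFun C a b) = crossFun C (σ a) (σ b) :=
  funext fun ν => by
    simp only [permute_apply, crossFun, Function.comp_apply, apply_ite (permuteVars k σ), map_one,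
      map_inv₀, map_sub, permuteVars_var, map_Qel]

lemma crossFun_mul_crossFun (a b : ℕ) :
    crossFun C a b * crossFun C b a + poleFun a b ^ 2 = qFun C a b :=
  funext fun ν => by
    simp only [Pi.mul_apply, Pi.add_apply, Pi.pow_apply, crossFun, poleFun, qFun,
      eq_comm (a := ν b)]
    by_cases h : ν a = ν b
    · rw [if_pos h, if_pos h, if_pos h, h, Qel_self, ← neg_sub (var k a) (var k b), inv_neg]
      ring
    · simp only [if_neg h]
      rcases trichotomous_of WellOrderingRel (ν a) (ν b) with hlt | heq | hgt
      · rw [if_pos hlt, if_neg (asymm hlt)]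
        ring
      · exact absurd heq h
      · rw [if_pos hgt, if_neg (asymm hgt), Qel_symm _ _ (Commute.all (var k a) _)]
        ring

lemma poleFun_mul_sub_qFun {a c : ℕ} (b : ℕ) (hac : a ≠ c) (ν : ℕ → I) :
    poleFun a c ν * (qFun C b c ν - qFun C a b ν) =
      if ν a = ν c then Qdiff C (ν a) (ν b) (var k a) (var k b) (var k c) else 0 := by
  have hpole := poleFun_mul_sub (k := k) hac ν
  have hdiff := Qdiff_mul_sub (C := C) (ν a) (ν b) (var k a) (var k b) (var k c)
  simp only [qFun, Qel_symm (ν b) (ν c) (Commute.all (var k b) _)]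
  split_ifs at hpole ⊢ with h
  · rw [← h]
    linear_combination (poleFun a c ν) * hdiff -
      Qdiff C (ν a) (ν b) (var k a) (var k b) (var k c) * hpole
  · have hac' : poleFun a c ν = (0 : RatFun k) := if_neg h
    rw [hac', zero_mul]

lemma crossFun_ne_zero {a b : ℕ} (hab : a ≠ b) (ν : ℕ → I) : crossFun C a b ν ≠ 0 := by
  unfold crossFun
  split_ifs with h
  · exact inv_ne_zero (sub_ne_zero.mpr (var_injective.ne hab))
  · exact Qel_var_ne_zero h hab
  · exact one_ne_zero

variable (C) in
/-- The Demazure operator exchanging `a` and `b`, by which the elements `τ_l` act. -/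
noncomputable def dem (a b : ℕ) : Module.End k (RepSpace k I) :=
  LinearMap.mulLeft k (crossFun C a b) ∘ₗ (permute (Equiv.swap a b)).toLinearMap +
    LinearMap.mulLeft k (poleFun a b)

lemma dem_apply (a b : ℕ) (g : RepSpace k I) :
    dem C a b g = crossFun C a b * permute (Equiv.swap a b) g + poleFun a b * g := rfl

lemma dem_dem (a b : ℕ) (g : RepSpace k I) : dem C a b (dem C a b g) = qFun C a b * g := by
  simp only [dem_apply, map_add, map_mul, permute_crossFun, permute_poleFun,
    permute_swap_permute_swap, Equiv.swap_apply_left, Equiv.swap_apply_right]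
  rw [poleFun_swap a b]
  linear_combination g * crossFun_mul_crossFun (C := C) a b

lemma dem_varFun_mul {a b : ℕ} (m : ℕ) (g : RepSpace k I) :
    dem C a b (varFun m * g) - varFun (Equiv.swap a b m) * dem C a b g =
      poleFun a b * (varFun m - varFun (Equiv.swap a b m)) * g := by
  simp only [dem_apply, map_mul, permute_varFun]
  ring

lemma dem_comm {a b c d : ℕ} (hac : a ≠ c) (had : a ≠ d) (hbc : b ≠ c) (hbd : b ≠ d)
    (g : RepSpace k I) : dem C a b (dem C c d g) = dem C c d (dem C a b g) := by
  have hperm : permute (Equiv.swap a b) (permute (Equiv.swap c d) g) =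
      permute (Equiv.swap c d) (permute (Equiv.swap a b) g) := by
    rw [← permute_mul, ← permute_mul, Equiv.mul_swap_eq_swap_mul,
      Equiv.swap_apply_of_ne_of_ne hac.symm hbc.symm,
      Equiv.swap_apply_of_ne_of_ne had.symm hbd.symm]
  simp only [dem_apply, map_add, map_mul, permute_crossFun, permute_poleFun,
    Equiv.swap_apply_of_ne_of_ne hac.symm hbc.symm, Equiv.swap_apply_of_ne_of_ne had.symm hbd.symm,
    Equiv.swap_apply_of_ne_of_ne hac had, Equiv.swap_apply_of_ne_of_ne hbc hbd]
  linear_combination crossFun C a b * crossFun C c d * hperm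

lemma dem_braid {a b c : ℕ} (hab : a ≠ b) (hbc : b ≠ c) (hac : a ≠ c) (g : RepSpace k I) :
    dem C b c (dem C a b (dem C b c g)) - dem C a b (dem C b c (dem C a b g)) =
      poleFun a c * (qFun C b c - qFun C a b) * g := by
  have hperm : permute (Equiv.swap b c) (permute (Equiv.swap a b) (permute (Equiv.swap b c) g)) =
      permute (Equiv.swap a b) (permute (Equiv.swap b c) (permute (Equiv.swap a b) g)) := by
    rw [← permute_mul, ← permute_mul, ← permute_mul, ← permute_mul,
      Equiv.swap_mul_swap_mul_swap hab hac, Equiv.swap_comm a b, Equiv.swap_comm b c,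
      Equiv.swap_mul_swap_mul_swap hbc.symm hac.symm, Equiv.swap_comm]
  have hArnold := poleFun_mul_poleFun (k := k) (I := I) hab hbc hac
  have hab' := crossFun_mul_crossFun (C := C) a b
  have hbc' := crossFun_mul_crossFun (C := C) b c
  simp only [dem_apply, map_add, map_mul, permute_crossFun, permute_poleFun, Equiv.swap_apply_left,
    Equiv.swap_apply_right, Equiv.swap_apply_of_ne_of_ne hab hac, permute_swap_permute_swap,
    Equiv.swap_apply_of_ne_of_ne hac.symm hbc.symm]
  rw [poleFun_swap a b, poleFun_swap b c]
  linear_combination crossFun C a b * crossFun C a c * crossFun C b c * hperm +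
    (crossFun C b c * permute (Equiv.swap b c) g - crossFun C a b * permute (Equiv.swap a b) g +
      (poleFun b c - poleFun a b) * g) * hArnold + poleFun a c * g * (hbc' - hab')

end RepSpace

end Demazure

namespace RepSpace

open RatFun

variable {k : Type} [Field k] {I : Type} {n : ℕ}

lemma comp_swap_restrict (ν : ℕ → I) {l : ℕ} (h : l + 1 < n) :
    (fun a : Fin n => (ν ∘ Equiv.swap l (l + 1)) a) = (fun a : Fin n => ν a) ∘ adjSwap l h :=
  funext fun a => congrArg ν (Fin.val_injective.swap_apply ⟨l, _⟩ ⟨l + 1, h⟩ a)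

variable [DecidableEq I]

variable (k) in
/-- The indicator function of the sequences beginning with `μ`. -/
noncomputable def ind (μ : Fin n → I) : RepSpace k I :=
  fun ν => if (fun a : Fin n => ν a) = μ then 1 else 0

lemma mul_ind_congr {f g : RepSpace k I} {μ : Fin n → I}
    (h : ∀ ν : ℕ → I, (fun a : Fin n => ν a) = μ → f ν = g ν) : f * ind k μ = g * ind k μ :=
  funext fun ν => by
    simp only [Pi.mul_apply, ind]
    split_ifs with hν
    · rw [h ν hν]
    · rw [mul_zero, mul_zero]

lemma ind_mul_ind (μ μ' : Fin n → I) : ind k μ * ind k μ' = if μ = μ' then ind k μ else 0 := by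
  funext ν
  by_cases h : μ = μ'
  · simp [ind, h]
  · rw [if_neg h]
    simp only [ind, Pi.mul_apply, Pi.zero_apply, ite_mul, one_mul, zero_mul]
    split_ifs with h₁ h₂
    · exact absurd (h₁.symm.trans h₂) h
    all_goals rfl

lemma permute_ind {l : ℕ} (h : l + 1 < n) (μ : Fin n → I) :
    permute (Equiv.swap l (l + 1)) (ind k μ) = ind k (μ ∘ adjSwap l h) := by
  funext ν
  have hiff : (fun a : Fin n => ν a) ∘ adjSwap l h = μ ↔
      (fun a : Fin n => ν a) = μ ∘ adjSwap l h := by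
    rw [← Equiv.eq_comp_symm, Equiv.symm_swap]
  simp only [permute_apply, ind, comp_swap_restrict ν h, hiff, apply_ite (permuteVars k _), map_one,
    map_zero]

lemma poleFun_mul_ind {l : ℕ} (h : l + 1 < n) (μ : Fin n → I) :
    poleFun l (l + 1) * ind k μ = poleFun l (l + 1) * ind k (μ ∘ adjSwap l h) := by
  funext ν
  by_cases hν : ν l = ν (l + 1)
  · have hswap : (fun a : Fin n => ν a) ∘ adjSwap l h = fun a : Fin n => ν a := by
      rw [Equiv.comp_swap_eq_update]
      simp [hν]
    simp only [Pi.mul_apply, ind, ← Equiv.comp_symm_eq, Equiv.symm_swap, hswap]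
  · simp only [Pi.mul_apply, poleFun, if_neg hν, zero_mul]

lemma poleFun_mul_sub_mul_ind {a b : Fin n} (hab : a ≠ b) (m : Fin n) (μ : Fin n → I) :
    poleFun a b * (varFun m - varFun (Equiv.swap a b m).val) * ind k μ =
      (if m = a ∧ μ a = μ b then -1 else if m = b ∧ μ a = μ b then 1 else 0) * ind k μ :=
  mul_ind_congr fun ν hν => by
    have hpole := poleFun_mul_sub (k := k) (Fin.val_injective.ne hab) ν
    subst hν
    simp only [Pi.mul_apply, Pi.sub_apply, varFun]
    rcases eq_or_ne m a with rfl | hma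
    · rw [Equiv.swap_apply_left, hpole]
      split_ifs <;> simp_all
    rcases eq_or_ne m b with rfl | hmb
    · rw [Equiv.swap_apply_right, ← neg_sub, mul_neg, hpole]
      split_ifs <;> simp_all
    · rw [Equiv.swap_apply_of_ne_of_ne hma hmb, sub_self, mul_zero]
      split_ifs <;> simp_all

variable [Fintype I] {C : CartanDatum k I}

lemma sum_ind : ∑ μ : Fin n → I, ind k μ = 1 :=
  funext fun ν => by simp [ind, Finset.sum_apply]

lemma dem_ind_mul {l : ℕ} (h : l + 1 < n) (μ : Fin n → I) (g : RepSpace k I) :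
    dem C l (l + 1) (ind k μ * g) = ind k (μ ∘ adjSwap l h) * dem C l (l + 1) g := by
  rw [dem_apply, dem_apply, map_mul, permute_ind h]
  linear_combination g * poleFun_mul_ind (k := k) h μ

lemma Qel_apply (i j : I) (f g : RepSpace k I) (ν : ℕ → I) :
    Qel C i j f g ν = Qel C i j (f ν) (g ν) :=
  map_Qel (Pi.evalAlgHom k (fun _ => RatFun k) ν) i j f g

lemma Qdiff_apply (i j : I) (f g h : RepSpace k I) (ν : ℕ → I) :
    Qdiff C i j f g h ν = Qdiff C i j (f ν) (g ν) (h ν) :=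
  map_Qdiff (Pi.evalAlgHom k (fun _ => RatFun k) ν) i j f g h

lemma Qel_varFun_mul_ind {a b : Fin n} (μ : Fin n → I) :
    Qel C (μ a) (μ b) (varFun a) (varFun b) * ind k μ = qFun C a b * ind k μ :=
  mul_ind_congr fun ν hν => by
    rw [qFun, ← hν, Qel_apply]
    rfl

lemma poleFun_mul_sub_qFun_mul_ind {a b c : Fin n} (hac : a ≠ c) (μ : Fin n → I) :
    poleFun a c * (qFun C b c - qFun C a b) * ind k μ =
      (if μ a = μ c then Qdiff C (μ a) (μ b) (varFun a) (varFun b) (varFun c) else 0) *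
        ind k μ :=
  mul_ind_congr fun ν hν => by
    subst hν
    simp only [Pi.mul_apply, Pi.sub_apply, poleFun_mul_sub_qFun _ (Fin.val_injective.ne hac)]
    split_ifs with h
    · simp only [Qdiff_apply, varFun]
    · rfl

lemma dem_mul_lmul_varFun_sub (l : ℕ) (h : l + 1 < n) (m : Fin n) (μ : Fin n → I) :
    (dem C l (l + 1) * Algebra.lmul k (RepSpace k I) (varFun m) -
        Algebra.lmul k (RepSpace k I) (varFun (adjSwap l h m : Fin n)) * dem C l (l + 1)) *
      Algebra.lmul k (RepSpace k I) (ind k μ) =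
    (if m = ⟨l, Nat.lt_of_succ_lt h⟩ ∧ μ ⟨l, Nat.lt_of_succ_lt h⟩ = μ ⟨l + 1, h⟩ then -1
      else if m = ⟨l + 1, h⟩ ∧ μ ⟨l, Nat.lt_of_succ_lt h⟩ = μ ⟨l + 1, h⟩ then 1 else 0) *
      Algebra.lmul k (RepSpace k I) (ind k μ) := by
  have hab : (⟨l, by omega⟩ : Fin n) ≠ ⟨l + 1, h⟩ := by simp
  have hcoeff := poleFun_mul_sub_mul_ind (k := k) hab m μ
  have hswap : ((adjSwap l h) m : ℕ) = Equiv.swap l (l + 1) m :=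
    Fin.val_injective.swap_apply ⟨l, _⟩ ⟨l + 1, h⟩ m |>.symm
  refine Eq.trans ?_ ((congrArg (Algebra.lmul k (RepSpace k I)) hcoeff).trans ?_)
  · refine LinearMap.ext fun g => ?_
    simp only [Module.End.mul_apply, Algebra.coe_lmul_eq_mul, LinearMap.mul_apply',
      LinearMap.sub_apply]
    rw [hswap, dem_varFun_mul, mul_assoc _ _ g]
  · simp only [map_mul, apply_ite (Algebra.lmul k (RepSpace k I)), map_neg, map_one, map_zero]

lemma dem_braid_mul_lmul_ind (l : ℕ) (h : l + 2 < n) (μ : Fin n → I) :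
    (dem C (l + 1) (l + 2) * dem C l (l + 1) * dem C (l + 1) (l + 2) -
        dem C l (l + 1) * dem C (l + 1) (l + 2) * dem C l (l + 1)) *
      Algebra.lmul k (RepSpace k I) (ind k μ) =
    (if μ ⟨l, by omega⟩ = μ ⟨l + 2, h⟩ then
        Qdiff C (μ ⟨l, by omega⟩) (μ ⟨l + 1, by omega⟩)
          (Algebra.lmul k (RepSpace k I) (varFun l))
          (Algebra.lmul k (RepSpace k I) (varFun (l + 1)))
          (Algebra.lmul k (RepSpace k I) (varFun (l + 2)))
      else 0) * Algebra.lmul k (RepSpace k I) (ind k μ) := by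
  have hac : (⟨l, by omega⟩ : Fin n) ≠ ⟨l + 2, h⟩ := by simp
  have hcoeff := poleFun_mul_sub_qFun_mul_ind (C := C) (b := ⟨l + 1, by omega⟩) hac μ
  refine Eq.trans ?_ ((congrArg (Algebra.lmul k (RepSpace k I)) hcoeff).trans ?_)
  · refine LinearMap.ext fun g => ?_
    simp only [Module.End.mul_apply, Algebra.coe_lmul_eq_mul, LinearMap.mul_apply',
      LinearMap.sub_apply]
    rw [dem_braid (by omega) (by omega) (by omega), mul_assoc _ _ g]
  · simp only [map_mul, apply_ite (Algebra.lmul k (RepSpace k I)), map_Qdiff, map_zero]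

lemma relations_rep (C : CartanDatum k I) (n : ℕ) :
    Relations C (fun μ : Fin n → I => Algebra.lmul k (RepSpace k I) (ind k μ))
      (fun a => Algebra.lmul k (RepSpace k I) (varFun a)) (fun l => dem C l (l + 1)) := by
  constructor
  case idem_mul_idem =>
    intro μ μ'
    rw [← map_mul, ind_mul_ind, apply_ite (Algebra.lmul k (RepSpace k I)), map_zero]
  case sum_idem => rw [← map_sum, sum_ind, map_one]
  case x_comm => exact fun a b => (Commute.all _ _).map _
  case x_idem => exact fun a μ => (Commute.all _ _).map _
  case tau_idem =>
    intro l h μ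
    refine LinearMap.ext fun g => ?_
    simpa only [Module.End.mul_apply, Algebra.coe_lmul_eq_mul, LinearMap.mul_apply'] using
      dem_ind_mul h μ g
  case tau_comm =>
    intro l l' hl _
    refine LinearMap.ext fun g => ?_
    simpa only [Module.End.mul_apply] using
      dem_comm (by omega) (by omega) (by omega) (by omega) g
  case tau_sq =>
    intro l h μ
    rw [← map_Qel, ← map_mul, Qel_varFun_mul_ind, pow_two]
    refine LinearMap.ext fun g => ?_
    simp only [Module.End.mul_apply, Algebra.coe_lmul_eq_mul, LinearMap.mul_apply', dem_dem,
      mul_assoc]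
  case tau_x => exact dem_mul_lmul_varFun_sub
  case braid => exact dem_braid_mul_lmul_ind

end RepSpace

lemma disjoint_eigenspace_iSup_Ioi {K M : Type*} [Field K] [AddCommGroup M] [Module K M]
    (f : Module.End K M) {x : ℕ → K} (hx : Function.Injective x) (m : ℕ) :
    Disjoint (f.eigenspace (x m)) (⨆ b : Set.Ioi m, f.eigenspace (x b)) :=
  (f.eigenspaces_iSupIndep.comp hx m).mono_right
    (iSup_le fun b => le_iSup₂ (f := fun j (_ : j ≠ m) => f.eigenspace (x j)) b.1
      (ne_of_gt b.2))

lemma commute_lmul_of_map_eq {R A : Type*} [CommSemiring R] [CommSemiring A] [Algebra R A]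
    {T : A →ₐ[R] A} {f : A} (hf : T f = f) : Commute T.toLinearMap (Algebra.lmul R A f) :=
  LinearMap.ext fun g => (map_mul T f g).trans (by rw [hf]; rfl)

section Faithfulness

open RatFun RepSpace

variable {k : Type} [Field k] {I : Type}

namespace RepSpace

variable (k I) in
/-- Right multiplication of operators on `RepSpace k I` by the variable `x_n`, as an operator which
is linear over the field of rational functions. -/
noncomputable def mulRightVar (n : ℕ) : Module.End (RatFun k) (Module.End k (RepSpace k I)) where
  toFun T := T * Algebra.lmul k (RepSpace k I) (varFun n)
  map_add' _ _ := rfl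
  map_smul' _ _ := rfl

variable (k I) in
/-- The operators `T` with `T x_n = x_b T`. -/
noncomputable abbrev varEigenspace (n b : ℕ) : Submodule (RatFun k) (Module.End k (RepSpace k I)) :=
  (mulRightVar k I n).eigenspace (var k b)

variable {n b : ℕ} {T : Module.End k (RepSpace k I)}

lemma mem_varEigenspace :
    T ∈ varEigenspace k I n b ↔ ∀ g, T (varFun n * g) = varFun b * T g := by
  rw [Module.End.mem_eigenspace_iff, LinearMap.ext_iff]
  rfl

lemma lmul_mul_mem_varEigenspace (f : RepSpace k I) (hT : T ∈ varEigenspace k I n b) :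
    Algebra.lmul k (RepSpace k I) f * T ∈ varEigenspace k I n b := by
  refine mem_varEigenspace.mpr fun g => ?_
  simp only [Module.End.mul_apply, Algebra.coe_lmul_eq_mul, LinearMap.mul_apply',
    mem_varEigenspace.mp hT]
  ring

lemma permute_mul_mem_varEigenspace (σ : Equiv.Perm ℕ) (hT : T ∈ varEigenspace k I n b) :
    (permute σ).toLinearMap * T ∈ varEigenspace k I n (σ b) := by
  refine mem_varEigenspace.mpr fun g => ?_
  simp only [Module.End.mul_apply, AlgHom.toLinearMap_apply, mem_varEigenspace.mp hT, map_mul,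
    permute_varFun]

variable (k I) in
/-- The span of the operators `T` with `T x_n = x_b T` for some `b > m`. -/
noncomputable def varEigenspaceGT (n m : ℕ) : Submodule (RatFun k) (Module.End k (RepSpace k I)) :=
  ⨆ b : Set.Ioi m, varEigenspace k I n b

lemma varEigenspace_le_GT {m : ℕ} (h : m < b) :
    varEigenspace k I n b ≤ varEigenspaceGT k I n m :=
  le_iSup_of_le (⟨b, h⟩ : Set.Ioi m) le_rfl

lemma varEigenspaceGT_anti {m m' : ℕ} (h : m ≤ m') :
    varEigenspaceGT k I n m' ≤ varEigenspaceGT k I n m :=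
  iSup_le fun b => varEigenspace_le_GT (h.trans_lt b.2)

lemma disjoint_varEigenspace_GT (n m : ℕ) :
    Disjoint (varEigenspace k I n m) (varEigenspaceGT k I n m) :=
  disjoint_eigenspace_iSup_Ioi (mulRightVar k I n) var_injective m

/-- The endomorphism of `RepSpace k I` which exchanges the variables `x_n` and `x_m` and freezes the
`n`-th entry of the sequences to `j`. -/
noncomputable def twist (n m : ℕ) (j : I) : RepSpace k I →ₐ[k] RepSpace k I :=
  AlgHom.pi fun ν =>
    (permuteVars k (Equiv.swap n m)).comp (Pi.evalAlgHom k _ (Function.update ν n j))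

lemma twist_apply (n m : ℕ) (j : I) (g : RepSpace k I) (ν : ℕ → I) :
    twist n m j g ν = permuteVars k (Equiv.swap n m) (g (Function.update ν n j)) := rfl

lemma twist_varFun {n m a : ℕ} (hnm : n ≤ m) (ha : a < n) (j : I) :
    twist n m j (varFun a) = varFun (k := k) a :=
  funext fun ν => by
    rw [twist_apply, varFun, permuteVars_var,
      Equiv.swap_apply_of_ne_of_ne ha.ne (ha.trans_le hnm).ne, varFun]

lemma twist_permute {n m : ℕ} {σ : Equiv.Perm ℕ} (hn : σ n = n) (hm : σ m = m) (j : I)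
    (g : RepSpace k I) : twist n m j (permute σ g) = permute σ (twist n m j g) :=
  funext fun ν => by
    have hcomp : Function.update ν n j ∘ σ = Function.update (ν ∘ σ) n j := by
      rw [Function.update_comp_equiv, (Equiv.symm_apply_eq σ).mpr hn.symm]
    have hswap : Equiv.swap n m * σ = σ * Equiv.swap n m := by
      rw [Equiv.mul_swap_eq_swap_mul, hn, hm]
    simp only [twist_apply, permute_apply, hcomp, ← AlgHom.comp_apply, ← permuteVars_mul, hswap]

variable [DecidableEq I]

lemma twist_ind {n m : ℕ} (μ : Fin n → I) (j : I) : twist n m j (ind k μ) = ind k μ :=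
  funext fun ν => by
    simp only [twist_apply, ind, apply_ite (permuteVars k _), map_one, map_zero,
      Function.update_of_ne (Fin.isLt _).ne]

lemma twist_poleFun {n m a b : ℕ} (hnm : n ≤ m) (ha : a < n) (hb : b < n) (j : I) :
    twist n m j (poleFun a b) = poleFun (k := k) a b :=
  funext fun ν => by
    simp only [twist_apply, poleFun, Function.update_of_ne ha.ne, Function.update_of_ne hb.ne,
      apply_ite (permuteVars k _), map_neg, map_inv₀, map_sub, permuteVars_var, map_zero,
      Equiv.swap_apply_of_ne_of_ne ha.ne (ha.trans_le hnm).ne,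
      Equiv.swap_apply_of_ne_of_ne hb.ne (hb.trans_le hnm).ne]

variable [Fintype I] (C : CartanDatum k I)

lemma twist_crossFun {n m a b : ℕ} (hnm : n ≤ m) (ha : a < n) (hb : b < n) (j : I) :
    twist n m j (crossFun C a b) = crossFun C a b :=
  funext fun ν => by
    simp only [twist_apply, crossFun]
    rw [Function.update_of_ne ha.ne, Function.update_of_ne hb.ne]
    simp only [apply_ite (permuteVars k _), map_inv₀, map_sub, permuteVars_var, map_one, map_Qel,
      Equiv.swap_apply_of_ne_of_ne ha.ne (ha.trans_le hnm).ne,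
      Equiv.swap_apply_of_ne_of_ne hb.ne (hb.trans_le hnm).ne]

lemma twist_dem {n m a b : ℕ} (hnm : n ≤ m) (ha : a < n) (hb : b < n) (j : I)
    (g : RepSpace k I) : twist n m j (dem C a b g) = dem C a b (twist n m j g) := by
  rw [dem_apply, dem_apply, map_add, map_mul, map_mul, twist_crossFun C hnm ha hb,
    twist_poleFun hnm ha hb, twist_permute (Equiv.swap_apply_of_ne_of_ne ha.ne' hb.ne')
      (Equiv.swap_apply_of_ne_of_ne (ha.trans_le hnm).ne' (hb.trans_le hnm).ne')]

/-- The summand of `dem C a b * T` involving the transposition of `a` and `b`. -/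
noncomputable def crossTerm (a b : ℕ) (T : Module.End k (RepSpace k I)) :
    Module.End k (RepSpace k I) :=
  Algebra.lmul k (RepSpace k I) (crossFun C a b) * ((permute (Equiv.swap a b)).toLinearMap * T)

lemma dem_mul_eq (a b : ℕ) (T : Module.End k (RepSpace k I)) :
    dem C a b * T = crossTerm C a b T + Algebra.lmul k (RepSpace k I) (poleFun a b) * T := rfl

lemma crossTerm_mem_varEigenspace (a c : ℕ) (hT : T ∈ varEigenspace k I n b) :
    crossTerm C a c T ∈ varEigenspace k I n (Equiv.swap a c b) :=
  lmul_mul_mem_varEigenspace _ (permute_mul_mem_varEigenspace _ hT)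

variable {C}

lemma eq_zero_of_crossTerm_eq_zero {a b : ℕ} (hab : a ≠ b) (h : crossTerm C a b T = 0) :
    T = 0 := by
  refine LinearMap.ext fun g => ?_
  have hperm : permute (Equiv.swap a b) (T g) = 0 := by
    funext ν
    exact (mul_eq_zero.mp (congrFun (LinearMap.congr_fun h g) ν)).resolve_left
      (crossFun_ne_zero hab ν)
  rw [← permute_swap_permute_swap a b (T g), hperm, map_zero, LinearMap.zero_apply]

lemma dem_mul_mem_varEigenspaceGT {a : ℕ} (hT : T ∈ varEigenspaceGT k I n (a + 1)) :
    dem C a (a + 1) * T ∈ varEigenspaceGT k I n a := by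
  refine Submodule.iSup_induction _ (motive := fun T => dem C a (a + 1) * T ∈ _) hT
    (fun b T hT => ?_) (by rw [mul_zero]; exact zero_mem _) fun T T' h h' => ?_
  · have hb : a + 1 < b := b.2
    have hcross := crossTerm_mem_varEigenspace C a (a + 1) hT
    rw [Equiv.swap_apply_of_ne_of_ne (by omega) (by omega)] at hcross
    exact varEigenspace_le_GT (by omega) (add_mem hcross (lmul_mul_mem_varEigenspace _ hT))
  · rw [mul_add]
    exact add_mem h h'

end RepSpace

variable [DecidableEq I] [Fintype I] (C : CartanDatum k I)

/-- The action of `R(n)` on `RepSpace k I`. -/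
noncomputable def rep (n : ℕ) : Alg C n →ₐ[k] Module.End k (RepSpace k I) :=
  (relations_rep C n).lift

@[simp] lemma rep_Ee {n : ℕ} (ν : Fin n → I) :
    rep C n (Ee C ν) = Algebra.lmul k (RepSpace k I) (ind k ν) := Relations.lift_Ee _ _

@[simp] lemma rep_Xx {n : ℕ} (a : Fin n) :
    rep C n (Xx C a) = Algebra.lmul k (RepSpace k I) (varFun a) := Relations.lift_Xx _ _

@[simp] lemma rep_tau {n l : ℕ} (h : l + 1 < n) : rep C n (tau C n l) = dem C l (l + 1) :=
  Relations.lift_tau _ h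

lemma rep_eps (n : ℕ) (i : I) :
    rep C (n + 1) (eps C n i) =
      Algebra.lmul k (RepSpace k I) fun ν => if ν n = i then 1 else 0 := by
  rw [eps, map_sum]
  simp only [rep_Ee]
  rw [← map_sum]
  refine congrArg (Algebra.lmul k (RepSpace k I)) (funext fun ν => ?_)
  simp [ind, Finset.sum_apply, Finset.sum_ite_eq]

lemma rep_iota (n : ℕ) (s : Alg C n) : rep C (n + 1) (iota C n s) = rep C n s := by
  suffices (rep C (n + 1)).comp (iota C n) = rep C n from DFunLike.congr_fun this s
  refine algHom_ext (fun μ => ?_) (fun a => ?_) fun l h => ?_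
  · rw [AlgHom.comp_apply, iota_Ee, map_sum]
    simp only [rep_Ee]
    rw [← map_sum]
    refine congrArg (Algebra.lmul k (RepSpace k I)) (funext fun ν => ?_)
    simp only [Finset.sum_apply, ind, Finset.sum_ite_eq, Finset.mem_filter_univ]
    rfl
  · rw [AlgHom.comp_apply, iota_Xx, rep_Xx, rep_Xx, Fin.val_castSucc]
  · rw [AlgHom.comp_apply, iota_tau C h, rep_tau C h, rep_tau C (Nat.lt_succ_of_lt h)]

lemma exists_leading_rep_cosetRep_mul {n c : ℕ} (hc : c ≤ n) {F : Module.End k (RepSpace k I)}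
    (hF : F ∈ varEigenspace k I n n) :
    ∃ T ∈ varEigenspace k I n (n - c), (T = 0 → F = 0) ∧
      rep C (n + 1) (cosetRep (tau C (n + 1)) n c) * F - T ∈ varEigenspaceGT k I n (n - c) := by
  induction c with
  | zero => exact ⟨F, hF, id, by rw [cosetRep, map_one, one_mul, sub_self]; exact zero_mem _⟩
  | succ c ih =>
    obtain ⟨T, hT, hTF, hGT⟩ := ih (Nat.le_of_succ_le hc)
    obtain ⟨a, ha⟩ : ∃ a, n - c = a + 1 := ⟨n - c - 1, by omega⟩
    have ha' : n - (c + 1) = a := by omega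
    rw [ha] at hT hGT
    have hcross := crossTerm_mem_varEigenspace C a (a + 1) hT
    rw [Equiv.swap_apply_right] at hcross
    refine ⟨crossTerm C a (a + 1) T, by rwa [ha'],
      fun h => hTF (eq_zero_of_crossTerm_eq_zero (by omega) h), ?_⟩
    have hpole := varEigenspace_le_GT a.lt_succ_self
      (lmul_mul_mem_varEigenspace (poleFun a (a + 1)) hT)
    have hsum := add_mem (dem_mul_mem_varEigenspaceGT (C := C) hGT) hpole
    rw [cosetRep, show n - 1 - c = a by omega, ha', map_mul, rep_tau C (by omega)]
    rwa [mul_sub, dem_mul_eq C a (a + 1) T, sub_add_eq_sub_sub, sub_add_cancel, ← mul_assoc] at hsum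

theorem eq_zero_of_sum_rep_cosetRep_mul_eq_zero {n : ℕ}
    {F : Fin (n + 1) → Module.End k (RepSpace k I)} (hF : ∀ c, F c ∈ varEigenspace k I n n)
    (hsum : ∑ c : Fin (n + 1), rep C (n + 1) (cosetRep (tau C (n + 1)) n c) * F c = 0) :
    F = 0 := by
  funext c
  induction c using WellFoundedGT.induction with
  | _ c ih =>
    set z : Fin (n + 1) → Module.End k (RepSpace k I) := fun d =>
      rep C (n + 1) (cosetRep (tau C (n + 1)) n d) * F d
    have hlower (d) (hd : d ∈ Finset.univ.erase c) : z d ∈ varEigenspaceGT k I n (n - c) := by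
      rcases (Finset.ne_of_mem_erase hd).lt_or_gt with hlt | hgt
      · obtain ⟨T, hT, -, hGT⟩ :=
          exists_leading_rep_cosetRep_mul C (Nat.lt_succ_iff.mp d.isLt) (hF d)
        have hdc : n - c < n - (d : ℕ) := by omega
        rw [← sub_add_cancel (z d) T]
        exact add_mem (varEigenspaceGT_anti hdc.le hGT) (varEigenspace_le_GT hdc hT)
      · simp only [z, ih d hgt, Pi.zero_apply, mul_zero, zero_mem]
    obtain ⟨T, hT, hTF, hGT⟩ :=
      exists_leading_rep_cosetRep_mul C (Nat.lt_succ_iff.mp c.isLt) (hF c)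
    refine hTF (Submodule.disjoint_def.mp (disjoint_varEigenspace_GT n _) T hT ?_)
    rw [← Finset.add_sum_erase _ z (Finset.mem_univ c), add_eq_zero_iff_eq_neg] at hsum
    rw [← sub_sub_cancel (z c) T, hsum]
    exact sub_mem (neg_mem (Submodule.sum_mem _ hlower)) (hsum ▸ hGT)

lemma rep_polyEval_apply (n : ℕ) (i : I) (f : Polynomial (Alg C n)) (g : RepSpace k I)
    {ν : ℕ → I} (hν : ν n = i) :
    rep C (n + 1) (polyEval (addStrand C n i) (Xx C (Fin.last n)) f) g ν =
      f.sum fun p s => rep C n s g ν * var k n ^ p := by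
  rw [polyEval_eq_sum, Polynomial.sum, Polynomial.sum, map_sum, LinearMap.sum_apply,
    Finset.sum_apply]
  refine Finset.sum_congr rfl fun p _ => ?_
  rw [((commute_addStrand_x_last C n i _).pow_right p).eq, addStrand_apply,
    ← (commute_eps_iota C n i _).eq, map_mul, map_mul, map_pow, rep_Xx, rep_eps, rep_iota,
    ← map_pow, mul_comm (rep C n _ g ν)]
  simp only [Module.End.mul_apply, Algebra.coe_lmul_eq_mul, LinearMap.mul_apply', Pi.mul_apply,
    Pi.pow_apply, hν, if_true, one_mul]
  rfl

lemma twist_rep {n m : ℕ} (hnm : n ≤ m) (j : I) (s : Alg C n) (g : RepSpace k I) :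
    twist n m j (rep C n s g) = rep C n s (twist n m j g) := by
  suffices Commute (twist n m j).toLinearMap (rep C n s) from LinearMap.congr_fun this g
  refine commute_of_commute_generators (forall_generators.mpr ⟨fun μ => ?_, fun a => ?_,
    fun l h => ?_⟩) s
  · rw [rep_Ee]
    exact commute_lmul_of_map_eq (twist_ind μ j)
  · rw [rep_Xx]
    exact commute_lmul_of_map_eq (twist_varFun hnm a.isLt j)
  · rw [rep_tau C h]
    exact LinearMap.ext fun g => twist_dem C hnm (Nat.lt_of_succ_lt h) h j g

/-- The values `s_p g (ν)` are the coefficients of a polynomial which, by twisting, vanishes at all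
the variables `x_m` with `m ≥ n`. -/
lemma rep_coeff_eq_zero {n : ℕ} {i : I} {f : Polynomial (Alg C n)}
    (hf : rep C (n + 1) (polyEval (addStrand C n i) (Xx C (Fin.last n)) f) = 0) (p : ℕ) :
    rep C n (f.coeff p) = 0 := by
  refine LinearMap.ext fun g => funext fun ν => ?_
  set q : Polynomial (RatFun k) := f.sum fun p s => Polynomial.monomial p (rep C n s g ν) with hq
  have hroot (m) (hm : n ≤ m) : q.IsRoot (var k m) := by
    have hν := rep_polyEval_apply C n i f (twist n m (ν n) g)
      (ν := Function.update ν n i) (Function.update_self n i ν)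
    rw [hf, LinearMap.zero_apply, Pi.zero_apply] at hν
    rw [Polynomial.IsRoot, hq, Polynomial.sum, Polynomial.eval_finsetSum,
      ← map_zero (permuteVars k (Equiv.swap n m)), hν, Polynomial.sum, map_sum]
    refine Finset.sum_congr rfl fun p _ => ?_
    rw [Polynomial.eval_monomial, map_mul, map_pow, permuteVars_var, Equiv.swap_apply_left,
      ← twist_rep C hm, twist_apply, Function.update_idem, Function.update_eq_self,
      ← AlgHom.comp_apply, ← permuteVars_mul, Equiv.swap_mul_self, permuteVars_one,
      AlgHom.id_apply]
  have hq0 : q = 0 := q.eq_zero_of_infinite_isRoot <|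
    ((Set.Ici_infinite n).image var_injective.injOn).mono (Set.image_subset_iff.mpr hroot)
  have hcoeff : q.coeff p = rep C n (f.coeff p) g ν := by
    rw [hq, Polynomial.sum, Polynomial.finsetSum_coeff]
    simp only [Polynomial.coeff_monomial]
    rw [Finset.sum_ite_eq' f.support p fun p => rep C n (f.coeff p) g ν, ite_eq_left_iff,
      Polynomial.notMem_support_iff]
    intro hp
    rw [hp, map_zero, LinearMap.zero_apply, Pi.zero_apply]
  rw [← hcoeff, hq0, Polynomial.coeff_zero, LinearMap.zero_apply, Pi.zero_apply]

theorem rep_comp_polyComb_injective {n : ℕ} (hrep : Function.Injective (rep C n)) (i : I) :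
    Function.Injective (rep C (n + 1) ∘ polyComb (addStrand C n i) (Xx C (Fin.last n))
      fun c : Fin (n + 1) => cosetRep (tau C (n + 1)) n c) := by
  refine (injective_iff_map_eq_zero ((rep C (n + 1)).toLinearMap ∘ₗ polyComb _ _ _)).mpr
    fun f hf => funext fun c => Polynomial.ext fun p => hrep ?_
  set F := fun c => rep C (n + 1) (polyEval (addStrand C n i) (Xx C (Fin.last n)) (f c))
  have hF (c) : F c ∈ varEigenspace k I n n := by
    refine mem_varEigenspace.mpr fun g => ?_
    have hcomm := (commute_polyEval (commute_addStrand_x_last C n i) (f c)).map (rep C (n + 1))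
    rw [rep_Xx] at hcomm
    exact LinearMap.congr_fun hcomm g
  have hF0 : F = 0 := eq_zero_of_sum_rep_cosetRep_mul_eq_zero C hF <| by
    simpa only [LinearMap.comp_apply, polyComb_apply, AlgHom.toLinearMap_apply, map_sum,
      map_mul] using hf
  rw [rep_coeff_eq_zero C (congrFun hF0 c), Pi.zero_apply, Polynomial.coeff_zero, map_zero]

lemma rep_zero_injective [Nonempty I] : Function.Injective (rep C 0) := by
  have hbot (z : Alg C 0) : z ∈ (⊥ : Subalgebra k (Alg C 0)) := by
    refine mem_of_generators_subset (forall_generators (p := (· ∈ (⊥ : Subalgebra k _))).mpr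
      ⟨fun ν => ?_, fun a => a.elim0, fun l hl => absurd hl (Nat.not_lt_zero _)⟩) z
    have hsum := (relations_generators C 0).sum_idem
    rw [Fintype.sum_subsingleton _ ν] at hsum
    exact hsum ▸ one_mem _
  refine (injective_iff_map_eq_zero (rep C 0)).mpr fun z hz => ?_
  obtain ⟨c, rfl⟩ := Algebra.mem_bot.mp (hbot z)
  rw [AlgHom.commutes] at hz
  have hc : algebraMap k (RatFun k) c = 0 := by
    have hν := congrFun (LinearMap.congr_fun hz 1) fun _ => Classical.arbitrary I
    rwa [Module.algebraMap_end_apply, Pi.smul_apply, Pi.one_apply,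
      ← Algebra.algebraMap_eq_smul_one] at hν
  rw [(map_eq_zero _).mp hc, map_zero]

theorem rep_injective [Nonempty I] (n : ℕ) : Function.Injective (rep C n) := by
  induction n with
  | zero => exact rep_zero_injective C
  | succ n ih =>
    refine (injective_iff_map_eq_zero (rep C (n + 1))).mpr fun z hz => ?_
    rw [← mul_one z, ← sum_eps C n, Finset.mul_sum]
    refine Finset.sum_eq_zero fun i _ => ?_
    obtain ⟨f, hf⟩ := mul_eps_mem_range_polyComb C n i z
    have hf0 : f = 0 := rep_comp_polyComb_injective C ih i <| by
      rw [Function.comp_apply, hf, map_mul, hz, zero_mul, Function.comp_apply, map_zero, map_zero]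
    rw [← hf, hf0, map_zero]

theorem polyComb_addStrand_injective (n : ℕ) (i : I) :
    Function.Injective (polyComb (addStrand C n i) (Xx C (Fin.last n))
      fun c : Fin (n + 1) => cosetRep (tau C (n + 1)) n c) :=
  haveI : Nonempty I := ⟨i⟩
  .of_comp (rep_comp_polyComb_injective C (rep_injective C n) i)

end Faithfulness

section Flip

variable {k : Type} [Field k] {I : Type} [Fintype I] [DecidableEq I] {C : CartanDatum k I}

lemma rev_mk {n l m : ℕ} (hl : l < n) (hm : m < n) (h : l + m + 1 = n) :
    Fin.rev ⟨l, hl⟩ = ⟨m, hm⟩ :=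
  Fin.ext (by simp only [Fin.val_rev]; omega)

lemma rev_adjSwap {n l m : ℕ} (h : l + 1 < n) (h' : m + 1 < n) (hlm : l + m + 2 = n) (a : Fin n) :
    (adjSwap l h a).rev = adjSwap m h' a.rev := by
  simp only [adjSwap, Equiv.swap_apply_def, Fin.ext_iff, Fin.val_rev]
  split_ifs <;> simp only [Fin.val_rev] <;> omega

namespace Relations

variable {n : ℕ} {A : Type} [Ring A] [Algebra k A] {e : (Fin n → I) → A} {x : Fin n → A}
  {t : ℕ → A}

lemma flip_tau_idem (H : Relations C e x t) {l m : ℕ} (h : l + 1 < n) (hlm : l + m + 2 = n)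
    (ν : Fin n → I) : -t m * e (ν ∘ Fin.rev) = e ((ν ∘ adjSwap l h) ∘ Fin.rev) * -t m := by
  have h' : m + 1 < n := by omega
  have hcomp : (ν ∘ adjSwap l h) ∘ Fin.rev = (ν ∘ Fin.rev) ∘ adjSwap m h' :=
    funext fun a => congrArg ν <| by
      rw [← Fin.rev_rev (adjSwap l h a.rev), rev_adjSwap h h' hlm, Fin.rev_rev]
  rw [neg_mul, H.tau_idem m h', hcomp, mul_neg]

lemma flip_tau_sq (H : Relations C e x t) {l m : ℕ} (h : l + 1 < n) (hlm : l + m + 2 = n)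
    (ν : Fin n → I) :
    (-t m) ^ 2 * e (ν ∘ Fin.rev) =
      Qel C (ν ⟨l, Nat.lt_of_succ_lt h⟩) (ν ⟨l + 1, h⟩) (x (Fin.rev ⟨l, Nat.lt_of_succ_lt h⟩))
        (x (Fin.rev ⟨l + 1, h⟩)) * e (ν ∘ Fin.rev) := by
  rw [neg_sq, H.tau_sq m (by omega), Qel_symm _ _ (H.x_comm _ _),
    ← rev_mk (m := m + 1) (Nat.lt_of_succ_lt h) _ (by omega), ← rev_mk (m := m) h _ (by omega)]
  simp only [Function.comp_apply, Fin.rev_rev]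

lemma flip_tau_x (H : Relations C e x t) {l m : ℕ} (h : l + 1 < n) (hlm : l + m + 2 = n)
    (a : Fin n) (ν : Fin n → I) :
    (-t m * x a.rev - x (adjSwap l h a).rev * -t m) * e (ν ∘ Fin.rev) =
      (if a = ⟨l, Nat.lt_of_succ_lt h⟩ ∧ ν ⟨l, Nat.lt_of_succ_lt h⟩ = ν ⟨l + 1, h⟩ then -1
        else if a = ⟨l + 1, h⟩ ∧ ν ⟨l, Nat.lt_of_succ_lt h⟩ = ν ⟨l + 1, h⟩ then 1
        else 0) * e (ν ∘ Fin.rev) := by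
  have h' : m + 1 < n := by omega
  have hsign (u v w z : A) : (-u * v - w * -u) * z = -((u * v - w * u) * z) := by noncomm_ring
  rw [rev_adjSwap h h' hlm, hsign, H.tau_x m h', ← rev_mk (m := m) h _ (by omega),
    ← rev_mk (m := m + 1) (Nat.lt_of_succ_lt h) _ (by omega), ← neg_mul]
  simp only [Function.comp_apply, Fin.rev_rev, Fin.rev_inj, eq_comm (a := ν ⟨l + 1, h⟩)]
  refine congrArg (· * _) ?_
  have hne : (⟨l, Nat.lt_of_succ_lt h⟩ : Fin n) ≠ ⟨l + 1, h⟩ := by simp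
  split_ifs with h1 h2 h2
  · exact absurd (h2.1.symm.trans h1.1) hne
  · exact neg_neg _
  · rfl
  · exact neg_zero

lemma flip_braid (H : Relations C e x t) {l m : ℕ} (h : l + 2 < n) (hlm : l + m + 3 = n)
    (ν : Fin n → I) :
    (-t m * -t (m + 1) * -t m - -t (m + 1) * -t m * -t (m + 1)) * e (ν ∘ Fin.rev) =
      (if ν ⟨l, Nat.lt_of_succ_lt (Nat.lt_of_succ_lt h)⟩ = ν ⟨l + 2, h⟩ then
        Qdiff C (ν ⟨l, Nat.lt_of_succ_lt (Nat.lt_of_succ_lt h)⟩) (ν ⟨l + 1, Nat.lt_of_succ_lt h⟩)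
          (x (Fin.rev ⟨l, Nat.lt_of_succ_lt (Nat.lt_of_succ_lt h)⟩))
          (x (Fin.rev ⟨l + 1, Nat.lt_of_succ_lt h⟩)) (x (Fin.rev ⟨l + 2, h⟩))
        else 0) * e (ν ∘ Fin.rev) := by
  have hsign : -t m * -t (m + 1) * -t m - -t (m + 1) * -t m * -t (m + 1) =
      t (m + 1) * t m * t (m + 1) - t m * t (m + 1) * t m := by noncomm_ring
  rw [hsign, H.braid m (by omega), Qdiff_symm _ _ _ (H.x_comm _ _),
    ← rev_mk (m := m) h _ (by omega), ← rev_mk (m := m + 1) (Nat.lt_of_succ_lt h) _ (by omega),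
    ← rev_mk (m := m + 2) (Nat.lt_of_succ_lt (Nat.lt_of_succ_lt h)) _ (by omega)]
  simp only [Function.comp_apply, Fin.rev_rev]
  split_ifs with hν hν' hν'
  · rw [hν]
  · exact absurd hν.symm hν'
  · exact absurd hν'.symm hν
  · rfl

theorem flip (H : Relations C e x t) :
    Relations C (fun ν => e (ν ∘ Fin.rev)) (fun a => x a.rev) fun l => -t (n - 2 - l) where
  idem_mul_idem ν ν' := by
    rw [H.idem_mul_idem]
    exact if_congr Fin.rev_surjective.injective_comp_right.eq_iff rfl rfl
  sum_idem := H.sum_idem ▸ Equiv.sum_comp (Equiv.arrowCongr Fin.revPerm (.refl I)) e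
  x_comm a b := H.x_comm _ _
  x_idem a ν := H.x_idem _ _
  tau_idem l h ν := H.flip_tau_idem h (by omega) ν
  tau_comm l l' hl h' := ((H.tau_comm _ _ (by omega) (by omega)).symm.neg_left).neg_right
  tau_sq l h ν := H.flip_tau_sq h (by omega) ν
  tau_x l h a ν := H.flip_tau_x h (by omega) a ν
  braid l h ν := by
    rw [show n - 2 - l = n - 3 - l + 1 by omega, show n - 2 - (l + 1) = n - 3 - l by omega]
    exact H.flip_braid h (by omega) ν

end Relations

variable (C)

/-- The involution of `R(n)` which reverses the order of the strands. -/
noncomputable def flip (n : ℕ) : Alg C n →ₐ[k] Alg C n := (relations_generators C n).flip.lift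

variable {n : ℕ}

@[simp] lemma flip_Ee (ν : Fin n → I) : flip C n (Ee C ν) = Ee C (ν ∘ Fin.rev) :=
  Relations.lift_Ee _ _

@[simp] lemma flip_Xx (a : Fin n) : flip C n (Xx C a) = Xx C a.rev :=
  Relations.lift_Xx _ _

lemma flip_tau {l m : ℕ} (h : l + m + 2 = n) : flip C n (tau C n l) = -tau C n m := by
  rw [flip, Relations.lift_tau _ (by omega), show n - 2 - l = m by omega]

lemma flip_flip (z : Alg C n) : flip C n (flip C n z) = z := by
  refine DFunLike.congr_fun (f := (flip C n).comp (flip C n)) (g := AlgHom.id k _) ?_ z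
  refine algHom_ext (fun ν => ?_) (fun a => ?_) fun l h => ?_
  · simp only [AlgHom.comp_apply, flip_Ee, Function.comp_assoc, Fin.rev_involutive.comp_self,
      Function.comp_id, AlgHom.id_apply]
  · simp only [AlgHom.comp_apply, flip_Xx, Fin.rev_rev, AlgHom.id_apply]
  · rw [AlgHom.comp_apply, flip_tau C (m := n - 2 - l) (by omega), map_neg,
      flip_tau C (m := l) (by omega), AlgHom.id_apply]
    exact neg_neg _

end Flip

section PolyBasis

variable {k : Type*} [CommRing k] {S B : Type*} [Ring S] [Algebra k S] [Ring B] [Algebra k B]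

/-- The family `v` makes `B φ(1)` a free right `S[X]`-module, where `S` acts through `φ` and `X`
acts as right multiplication by `x`. -/
structure IsPolyBasis (φ : S →ₙₐ[k] B) (x : B) {m : ℕ} (v : Fin m → B) : Prop where
  commute : ∀ s, Commute (φ s) x
  injective : Function.Injective (polyComb φ x v)
  mul_map_one_mem_range : ∀ b, b * φ 1 ∈ LinearMap.range (polyComb φ x v)

lemma polyEval_mul_X (φ : S →ₙₐ[k] B) (x : B) (f : Polynomial S) :
    polyEval φ x (f * Polynomial.X) = polyEval φ x f * x := by
  induction f using Polynomial.induction_on' with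
  | add f g hf hg => rw [add_mul, map_add, map_add, hf, hg, add_mul]
  | monomial d s =>
    rw [Polynomial.monomial_mul_X, polyEval_monomial, polyEval_monomial, pow_succ, mul_assoc]

variable {S' B' : Type*} [Ring S'] [Algebra k S'] [Ring B'] [Algebra k B'] {φ : S →ₙₐ[k] B}
  {φ' : S' →ₙₐ[k] B'} {p : S →ₐ[k] S'} {q : B →ₐ[k] B'}

lemma map_polyEval (hφ : ∀ s, φ' (p s) = q (φ s)) (x : B) (f : Polynomial S) :
    q (polyEval φ x f) = polyEval φ' (q x) (f.map (p : S →+* S')) := by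
  induction f using Polynomial.induction_on' with
  | add f g hf hg => rw [map_add, map_add, hf, hg, Polynomial.map_add, map_add]
  | monomial d s =>
    rw [Polynomial.map_monomial, polyEval_monomial, polyEval_monomial, map_mul, map_pow, ← hφ]
    rfl

lemma map_polyComb (hφ : ∀ s, φ' (p s) = q (φ s)) (x : B) {m : ℕ} (v : Fin m → B)
    (f : Fin m → Polynomial S) :
    q (polyComb φ x v f) = polyComb φ' (q x) (q ∘ v) fun a => (f a).map (p : S →+* S') := by
  simp only [polyComb_apply, map_sum, map_mul, map_polyEval hφ, Function.comp_apply]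

lemma polyEval_mul_C {x : B} {E : S} {E' : B} (hE' : Commute E' x) (hE : φ E = φ 1 * E')
    (f : Polynomial S) : polyEval φ x (f * Polynomial.C E) = polyEval φ x f * E' := by
  induction f using Polynomial.induction_on' with
  | add f g hf hg => rw [add_mul, map_add, map_add, hf, hg, add_mul]
  | monomial d s =>
    rw [Polynomial.monomial_mul_C, polyEval_monomial, polyEval_monomial, map_mul, hE, ← mul_assoc,
      ← map_mul, mul_one, mul_assoc, mul_assoc, (hE'.pow_right d).eq]

/-- A basis descends along surjections `p` and `q` when the kernel of `q` is cut out by an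
idempotent `E'` which corresponds to an element `E` lifting `1`. -/
theorem IsPolyBasis.map {x : B} {m : ℕ} {v : Fin m → B} (h : IsPolyBasis φ x v)
    (hp : Function.Surjective p) (hq : Function.Surjective q) (hφ : ∀ s, φ' (p s) = q (φ s))
    {E : S} {E' : B} (hpE : p E = 1) (hqE' : ∀ b, q b = 0 → b * E' = 0) (hE' : Commute E' x)
    (hE : φ E = φ 1 * E') : IsPolyBasis φ' (q x) (q ∘ v) where
  commute := hp.forall.mpr fun s => hφ s ▸ (h.commute s).map q
  injective := by
    refine (injective_iff_map_eq_zero _).mpr fun f' hf' => ?_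
    choose f hf using fun a => Polynomial.map_surjective (p : S →+* S') hp (f' a)
    have hzero : polyComb φ x v (fun a => f a * Polynomial.C E) = 0 := by
      have hqf : q (polyComb φ x v f) = 0 := by rw [map_polyComb hφ, funext hf, hf']
      simpa only [polyComb_apply, polyEval_mul_C hE' hE, Finset.sum_mul, mul_assoc] using
        hqE' _ hqf
    have hfE := (injective_iff_map_eq_zero _).mp h.injective _ hzero
    refine funext fun a => ?_
    have ha := congrArg (Polynomial.map (p : S →+* S')) (congrFun hfE a)
    rwa [Polynomial.map_mul, Polynomial.map_C, hf, RingHom.coe_coe, hpE, Polynomial.C_1, mul_one,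
      Pi.zero_apply, Polynomial.map_zero] at ha
  mul_map_one_mem_range := hq.forall.mpr fun b => by
    obtain ⟨f, hf⟩ := h.mul_map_one_mem_range b
    exact ⟨_, by rw [← map_polyComb hφ, hf, map_mul, ← hφ, map_one]⟩

end PolyBasis

section Content

variable {I : Type} [DecidableEq I] {n : ℕ}

lemma content_comp (ν : Fin n → I) (σ : Equiv.Perm (Fin n)) : content (ν ∘ σ) = content ν :=
  funext fun i => Finset.card_equiv σ fun a => by
    simp only [Finset.mem_filter_univ, Function.comp_apply]

lemma content_eq_addA_init (μ : Fin (n + 1) → I) :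
    content μ = addA (content (Fin.init μ)) (μ (Fin.last n)) :=
  funext fun i => by
    simp only [content, addA, Finset.card_filter]
    rw [Fin.sum_univ_castSucc]
    simp only [Fin.init, eq_comm]

lemma addA_injective (i : I) : Function.Injective (addA · i) := fun _ _ h =>
  funext fun j => Nat.add_right_cancel (congrFun h j)

variable [Fintype I]

lemma mem_seqs {β : I → ℕ} {ν : Fin n → I} : ν ∈ seqs β n ↔ content ν = β :=
  Finset.mem_filter_univ ν

end Content

section Corner

universe u

variable {k : Type*} [CommRing k] {A : Type u} [Ring A] [Algebra k A]

lemma exists_algHom_eq_one_of_commute {E : A} (hE : IsIdempotentElem E) (hc : ∀ z, Commute E z) :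
    ∃ (A' : Type u) (_ : Ring A') (_ : Algebra k A') (f : A →ₐ[k] A'),
      f E = 1 ∧ ∀ z, f z = 0 → z * E = 0 := by
  -- `A` acts on the ideal `A E`, and `E` acts on it as the identity.
  let N : Submodule A A := Submodule.span A {E}
  refine ⟨Module.End k N, inferInstance, inferInstance, Algebra.lsmul k k N, ?_, fun z hz => ?_⟩
  · refine LinearMap.ext fun ⟨w, hw⟩ => Subtype.ext ?_
    obtain ⟨c, rfl⟩ := Submodule.mem_span_singleton.mp hw
    change E * (c * E) = c * E
    rw [(hc _).eq, mul_assoc, hE.eq]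
  · exact congrArg Subtype.val
      (LinearMap.congr_fun hz ⟨E, Submodule.mem_span_singleton_self E⟩)

end Corner

section Blocks

variable {k : Type} [Field k] {I : Type} [Fintype I] [DecidableEq I] (C : CartanDatum k I)
  (n : ℕ) (β : I → ℕ)

lemma commute_Xx_eIdem (a : Fin n) : Commute (Xx C a) (eIdem C n β) :=
  (relations_generators C n).commute_x_sum _ _

lemma commute_eIdem (z : Alg C n) : Commute (eIdem C n β) z := by
  have H := relations_generators C n
  refine commute_of_commute_generators (f := AlgHom.id k _) (forall_generators.mpr ⟨fun ν => ?_,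
    fun a => (commute_Xx_eIdem C n β a).symm, fun l h => (H.commute_tau_sum h fun ν => ?_).symm⟩) z
  · rw [commute_iff_eq, AlgHom.id_apply, eIdem, H.sum_mul_idem, H.idem_mul_sum]
  · rw [mem_seqs, mem_seqs, content_comp]

lemma eIdem_mul_eIdem : eIdem C n β * eIdem C n β = eIdem C n β := by
  rw [eIdem, (relations_generators C n).sum_mul_sum, Finset.inter_self]

lemma flip_sum_Ee {n : ℕ} {s t : Finset (Fin n → I)} (h : ∀ ν, ν ∈ s ↔ ν ∘ Fin.rev ∈ t) :
    flip C n (∑ ν ∈ s, Ee C ν) = ∑ ν ∈ t, Ee C ν := by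
  simp only [map_sum, flip_Ee]
  exact Finset.sum_equiv (Equiv.arrowCongr Fin.revPerm (.refl I)) h fun _ _ => rfl

lemma flip_eIdem : flip C n (eIdem C n β) = eIdem C n β :=
  flip_sum_Ee C fun ν => by rw [mem_seqs, mem_seqs, ← content_comp ν Fin.revPerm]; rfl

lemma flip_eR (i : I) : flip C (n + 1) (eR C n β i) = eL C n β i :=
  flip_sum_Ee C fun ν => by
    rw [Finset.mem_filter, Finset.mem_filter, mem_seqs, mem_seqs, ← content_comp ν Fin.revPerm,
      Function.comp_apply, Fin.rev_zero]
    rfl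

lemma eR_eq_eps_mul_eIdem (i : I) :
    eR C n β i = eps C n i * eIdem C (n + 1) (addA β i) := by
  rw [eps, eIdem, (relations_generators C (n + 1)).sum_mul_sum, Finset.filter_inter,
    Finset.univ_inter, eR]

lemma addStrand_eIdem (i : I) : addStrand C n i (eIdem C n β) = eR C n β i := by
  have hι : iota C n (eIdem C n β) =
      ∑ μ : Fin (n + 1) → I with Fin.init (α := fun _ => I) μ ∈ seqs β n, Ee C μ := by
    simp only [eIdem, map_sum, iota_Ee]
    rw [Finset.sum_fiberwise_eq_sum_filter]
  rw [addStrand_apply, hι, eps, (relations_generators C (n + 1)).sum_mul_sum, eR]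
  refine Finset.sum_congr (Finset.ext fun μ => ?_) fun _ _ => rfl
  simp only [Finset.mem_inter, Finset.mem_filter, Finset.mem_univ, true_and, mem_seqs]
  refine and_congr_left fun h => ?_
  rw [content_eq_addA_init, h, (addA_injective i).eq_iff]

lemma toB_mkAlgHom (z : FA k I n) :
    toB C (RingQuot.mkAlgHom k (Rel C n) z) = RingQuot.mkAlgHom k (URel C n β) z := by
  rw [toB, RingQuot.liftAlgHom_mkAlgHom_apply]

lemma toB_eIdem : toB C (β := β) (eIdem C n β) = 1 := by
  have h := RingQuot.mkAlgHom_rel k (URel.unit (C := C) (n := n) (β := β))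
  rw [map_one, map_sum] at h
  rw [eIdem, map_sum, ← h]
  exact Finset.sum_congr rfl fun ν _ => toB_mkAlgHom C n β _

lemma toB_surjective : Function.Surjective (toB C (n := n) (β := β)) :=
  (RingQuot.mkAlgHom_surjective k (URel C n β)).forall.mpr fun z => ⟨_, toB_mkAlgHom C n β z⟩

variable {C n β}

/-- The universal property of `R(β)`: a homomorphism out of `R(n)` sending `e(β)` to `1` factors
through `R(β)`. -/
noncomputable def blockLift {A : Type} [Ring A] [Algebra k A] (f : Alg C n →ₐ[k] A)
    (hf : f (eIdem C n β) = 1) : bAlg C n β →ₐ[k] A :=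
  RingQuot.liftAlgHom k ⟨f.comp (RingQuot.mkAlgHom k (Rel C n)), fun _ _ h => by
    cases h with
    | base h => exact congrArg f (RingQuot.mkAlgHom_rel k h)
    | unit =>
      rw [map_one, ← hf, eIdem, map_sum, map_sum]
      rfl⟩

lemma blockLift_toB {A : Type} [Ring A] [Algebra k A] (f : Alg C n →ₐ[k] A)
    (hf : f (eIdem C n β) = 1) (z : Alg C n) : blockLift f hf (toB C z) = f z := by
  refine DFunLike.congr_fun (f := (blockLift f hf).comp (toB C)) ?_ z
  refine RingQuot.ringQuot_ext' k _ _ (AlgHom.ext fun z => ?_)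
  simp only [AlgHom.comp_apply, blockLift, toB, RingQuot.liftAlgHom_mkAlgHom_apply]

lemma mul_eIdem_eq_zero_of_toB_eq_zero {z : Alg C n} (hz : toB C (β := β) z = 0) :
    z * eIdem C n β = 0 := by
  obtain ⟨A, _, _, f, hf, hker⟩ := exists_algHom_eq_one_of_commute (k := k)
    (eIdem_mul_eIdem C n β) (commute_eIdem C n β)
  refine hker z ?_
  rw [← blockLift_toB f hf, hz, map_zero]

end Blocks

section Bases

variable {k : Type} [Field k] {I : Type} [Fintype I] [DecidableEq I] {C : CartanDatum k I} {n : ℕ}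

lemma nonUnitalAlgHom_ext {A : Type} [Ring A] [Algebra k A] {f g : Alg C n →ₙₐ[k] A}
    (he : ∀ ν, f (Ee C ν) = g (Ee C ν)) (hx : ∀ a, f (Xx C a) = g (Xx C a))
    (ht : ∀ l, l + 1 < n → f (tau C n l) = g (tau C n l)) : f = g := by
  have h1 : f 1 = g 1 := by
    rw [← (relations_generators C n).sum_idem, map_sum, map_sum, funext he]
  let S : Subalgebra k (Alg C n) :=
    { carrier := {z | f z = g z}
      mul_mem' {a b} ha hb := by rw [Set.mem_ofPred_eq] at *; rw [map_mul, map_mul, ha, hb]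
      add_mem' {a b} ha hb := by rw [Set.mem_ofPred_eq] at *; rw [map_add, map_add, ha, hb]
      algebraMap_mem' r := by
        rw [Set.mem_ofPred_eq, Algebra.algebraMap_eq_smul_one, map_smul, map_smul, h1] }
  exact NonUnitalAlgHom.ext fun z => mem_of_generators_subset (S := S)
    (forall_generators (p := (· ∈ S)).mpr ⟨he, hx, ht⟩) z

variable (C n) in
lemma isPolyBasis_addStrand (i : I) :
    IsPolyBasis (addStrand C n i) (Xx C (Fin.last n))
      fun c : Fin (n + 1) => cosetRep (tau C (n + 1)) n c where
  commute := commute_addStrand_x_last C n i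
  injective := polyComb_addStrand_injective C n i
  mul_map_one_mem_range z := by
    rw [addStrand_one]
    exact mul_eps_mem_range_polyComb C n i z

variable {β : I → ℕ} {i : I}

lemma toB_eR : toB C (β := addA β i) (eR C n β i) = toB C (eps C n i) := by
  rw [eR_eq_eps_mul_eIdem, map_mul, toB_eIdem, mul_one]

lemma toB_eL : toB C (β := addA β i) (eL C n β i) = toB C (flip C (n + 1) (eps C n i)) := by
  rw [← flip_eR, eR_eq_eps_mul_eIdem, map_mul, map_mul, flip_eIdem, toB_eIdem, mul_one]

lemma addStrand_Ee (ν : Fin n → I) : addStrand C n i (Ee C ν) = Ee C (Fin.snoc ν i) := by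
  rw [addStrand_apply, Ee_eq_iota_mul_eps C (Fin.snoc (α := fun _ => I) ν i), Fin.init_snoc,
    Fin.snoc_last]

variable {φ : bAlg C n β →ₙₐ[k] bAlg C (n + 1) (addA β i)}

lemma IsUpRb.map_toB (h : IsUpRb C i φ) (z : Alg C n) :
    φ (toB C z) = toB C (addStrand C n i z) := by
  obtain ⟨he, hx, ht⟩ := h
  refine DFunLike.congr_fun (f := φ.comp (toB C).toNonUnitalAlgHom)
    (g := (toB C).toNonUnitalAlgHom.comp (addStrand C n i)) ?_ z
  refine nonUnitalAlgHom_ext (fun ν => ?_) (fun a => ?_) fun l hl => ?_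
  · exact (he ν).trans (congrArg (toB C) (addStrand_Ee ν).symm)
  · refine (hx a).trans ?_
    rw [map_mul, toB_eR, ← map_mul, ← iota_Xx]
    rfl
  · rw [← Tt_eq_tau C l hl]
    refine (ht l hl).trans ?_
    rw [map_mul, toB_eR, ← map_mul, Tt_eq_tau, Tt_eq_tau, ← iota_tau C hl]
    rfl

lemma IsUpLb.map_toB_flip (h : IsUpLb C i φ) (z : Alg C n) :
    φ (toB C (flip C n z)) = toB C (flip C (n + 1) (addStrand C n i z)) := by
  obtain ⟨he, hx, ht⟩ := h
  refine DFunLike.congr_fun (f := φ.comp ((toB C).comp (flip C n)).toNonUnitalAlgHom)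
    (g := ((toB C).comp (flip C (n + 1))).toNonUnitalAlgHom.comp (addStrand C n i)) ?_ z
  refine nonUnitalAlgHom_ext (fun ν => ?_) (fun a => ?_) fun l hl => ?_
  · change φ (toB C (flip C n (Ee C ν))) = toB C (flip C (n + 1) (addStrand C n i (Ee C ν)))
    rw [flip_Ee, he, addStrand_Ee, flip_Ee, Fin.snoc_comp_rev]
  · change φ (toB C (flip C n (Xx C a))) = toB C (flip C (n + 1) (iota C n (Xx C a) * eps C n i))
    rw [flip_Xx, hx, map_mul, toB_eL, ← map_mul, iota_Xx, map_mul (flip C _), flip_Xx,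
      Fin.rev_castSucc]
  · change φ (toB C (flip C n (tau C n l))) =
      toB C (flip C (n + 1) (iota C n (tau C n l) * eps C n i))
    obtain ⟨m, hm⟩ : ∃ m, l + m + 2 = n := ⟨n - 2 - l, by omega⟩
    rw [flip_tau C hm, ← Tt_eq_tau C m (by omega), map_neg, map_neg, ht m (by omega), map_mul,
      toB_eL, ← map_mul, ← map_neg, iota_tau C hl, map_mul (flip C _),
      flip_tau C (show l + (m + 1) + 2 = n + 1 by omega), Tt_eq_tau]
    exact congrArg (toB C) (neg_mul (tau C (n + 1) (m + 1)) _).symm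

lemma IsUpRb.apply_one (h : IsUpRb C i φ) : φ 1 = toB C (eR C n β i) := by
  rw [← map_one (toB C), h.map_toB, addStrand_one, toB_eR]

lemma IsUpLb.apply_one (h : IsUpLb C i φ) : φ 1 = toB C (eL C n β i) := by
  rw [← map_one (toB C), ← map_one (flip C n), h.map_toB_flip, addStrand_one, toB_eL]

lemma addStrand_eIdem_eq_mul :
    addStrand C n i (eIdem C n β) = addStrand C n i 1 * eIdem C (n + 1) (addA β i) := by
  rw [addStrand_eIdem, addStrand_one, eR_eq_eps_mul_eIdem]

theorem IsUpRb.isPolyBasis (h : IsUpRb C i φ) :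
    IsPolyBasis φ (toB C (Xx C (Fin.last n)))
      (toB C ∘ fun c : Fin (n + 1) => cosetRep (tau C (n + 1)) n c) :=
  (isPolyBasis_addStrand C n i).map (toB_surjective C n β) (toB_surjective C _ _) h.map_toB
    (toB_eIdem C n β) (fun _ => mul_eIdem_eq_zero_of_toB_eq_zero) (commute_eIdem C _ _ _)
    addStrand_eIdem_eq_mul

theorem IsUpLb.isPolyBasis (h : IsUpLb C i φ) :
    IsPolyBasis φ (toB C (Xx C 0))
      (((toB C).comp (flip C (n + 1))) ∘ fun c : Fin (n + 1) => cosetRep (tau C (n + 1)) n c) := by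
  have hflip (m) : Function.Surjective (flip C m) := fun z => ⟨_, flip_flip C z⟩
  have hx : Xx C 0 = flip C (n + 1) (Xx C (Fin.last n)) := by rw [flip_Xx, Fin.rev_last]
  rw [hx]
  refine (isPolyBasis_addStrand C n i).map (p := (toB C).comp (flip C n))
    (q := (toB C).comp (flip C (n + 1))) ((toB_surjective C n β).comp (hflip n))
    ((toB_surjective C _ _).comp (hflip _)) h.map_toB_flip ?_ (fun b hb => ?_)
    (commute_eIdem C _ _ _) (addStrand_eIdem_eq_mul (β := β))
  · rw [AlgHom.comp_apply, flip_eIdem, toB_eIdem]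
  · have hb' := congrArg (flip C (n + 1)) (mul_eIdem_eq_zero_of_toB_eq_zero (z := flip C _ b) hb)
    rwa [map_mul, flip_flip, flip_eIdem, map_zero] at hb'

end Bases

open MulOpposite TensorProduct

section Coefficients

variable {k : Type*} [CommRing k] {S B : Type*} [Ring S] [Algebra k S] [Ring B] [Algebra k B]
  {φ : S →ₙₐ[k] B} {x : B} {m : ℕ} {v : Fin m → B}

/-- The coefficients `f` in the expansion `b φ(1) = ∑ v_a f_a(x)`. -/
noncomputable def IsPolyBasis.coeff (h : IsPolyBasis φ x v) : B →ₗ[k] (Fin m → Polynomial S) :=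
  (LinearEquiv.ofInjective _ h.injective).symm.toLinearMap ∘ₗ
    (LinearMap.mulRight k (φ 1)).codRestrict _ h.mul_map_one_mem_range

namespace IsPolyBasis

lemma polyComb_coeff (h : IsPolyBasis φ x v) (b : B) : polyComb φ x v (h.coeff b) = b * φ 1 :=
  congrArg Subtype.val ((LinearEquiv.ofInjective _ h.injective).apply_symm_apply _)

lemma coeff_eq (h : IsPolyBasis φ x v) {b : B} {f : Fin m → Polynomial S}
    (hf : polyComb φ x v f = b * φ 1) : h.coeff b = f :=
  h.injective ((h.polyComb_coeff b).trans hf.symm)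

lemma coeff_mul_map (h : IsPolyBasis φ x v) (b : B) (r : S) :
    h.coeff (b * φ r) = fun a => h.coeff b a * Polynomial.C r := by
  have hr : φ r = φ 1 * φ r := by rw [← map_mul, one_mul]
  refine h.coeff_eq ?_
  simp only [polyComb_apply, polyEval_mul_C (h.commute r) hr, ← mul_assoc]
  rw [← Finset.sum_mul, ← polyComb_apply, h.polyComb_coeff, mul_assoc, mul_assoc, ← map_mul,
    ← map_mul, one_mul, mul_one]

lemma coeff_mul_x (h : IsPolyBasis φ x v) (b : B) :
    h.coeff (b * (x * φ 1)) = fun a => h.coeff b a * Polynomial.X := by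
  refine h.coeff_eq ?_
  simp only [polyComb_apply, polyEval_mul_X, ← mul_assoc]
  rw [← Finset.sum_mul, ← polyComb_apply, h.polyComb_coeff, mul_assoc, (h.commute 1).eq,
    mul_assoc, mul_assoc, ← map_mul, one_mul]

lemma coeff_basis_mul_pow (h : IsPolyBasis φ x v) (a : Fin m) (c : ℕ) :
    h.coeff (v a * x ^ c) = Pi.single a (Polynomial.monomial c 1) := by
  refine h.coeff_eq ?_
  rw [polyComb_single, polyEval_monomial, ((h.commute 1).pow_right c).eq, mul_assoc]

end IsPolyBasis

end Coefficients

section BaseChange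

variable {k : Type} [Field k] {S B A : Type} [Ring S] [Algebra k S] [Ring B] [Algebra k B]
  [Ring A] [Algebra k A] {φ : S →ₙₐ[k] B} {x : B} {m : ℕ} {v : Fin m → B}

/-- The map `b ⊗ s ↦ (π(f_a) s)_a`, where `f` are the coefficients of `b`. -/
noncomputable def IsPolyBasis.tensorCoeff (h : IsPolyBasis φ x v) (π : S →ₐ[k] A) :
    B ⊗[k] A →ₗ[k] (Fin m → Polynomial A) :=
  LinearMap.pi fun a => TensorProduct.lift ((LinearMap.mul k (Polynomial A)).compl₁₂
    ((Polynomial.mapAlgHom π).toLinearMap ∘ₗ LinearMap.proj a ∘ₗ h.coeff)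
    (Polynomial.CAlgHom (R := k)).toLinearMap)

lemma IsPolyBasis.tensorCoeff_tmul (h : IsPolyBasis φ x v) (π : S →ₐ[k] A) (b : B) (s : A)
    (a : Fin m) : h.tensorCoeff π (b ⊗ₜ[k] s) a =
      (h.coeff b a).map (π : S →+* A) * Polynomial.C s := rfl

variable [Module S A]

variable (φ) in
lemma OTmk_mul_map_tmul (b : B) (r : S) (s : A) :
    OTmk k S B A φ ((b * φ r) ⊗ₜ[k] s) = OTmk k S B A φ (b ⊗ₜ[k] (r • s)) :=
  (Submodule.Quotient.eq _).mpr (Submodule.subset_span ⟨b, r, s, rfl⟩)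

variable (S A φ x v) in
/-- The map `g ↦ ∑ v_a x^c ⊗ g_{a,c}`, where `g_{a,c}` is the coefficient of `X^c` in `g_a`. -/
noncomputable def balancedComb : (Fin m → Polynomial A) →ₗ[k] OT k S B A φ :=
  ∑ a, (Polynomial.lsum fun c => ((TRel k S B A φ).mkQ.restrictScalars k) ∘ₗ
    TensorProduct.mk k B A (v a * x ^ c)) ∘ₗ LinearMap.proj a

lemma balancedComb_single_monomial (a : Fin m) (c : ℕ) (s : A) :
    balancedComb S A φ x v (Pi.single a (Polynomial.monomial c s)) =
      OTmk k S B A φ ((v a * x ^ c) ⊗ₜ[k] s) := by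
  simp only [balancedComb, LinearMap.sum_apply, LinearMap.comp_apply, LinearMap.proj_apply]
  rw [Finset.sum_eq_single a, Pi.single_eq_same, Polynomial.lsum_apply,
    Polynomial.sum_monomial_index]
  · rfl
  · exact LinearMap.map_zero _
  · intro b _ hb
    rw [Pi.single_eq_of_ne hb, map_zero]
  · exact fun ha => absurd (Finset.mem_univ a) ha

namespace IsPolyBasis

variable {π : S →ₐ[k] A}

lemma tensorCoeff_mem_TRel (h : IsPolyBasis φ x v) (hπ : ∀ (r : S) (s : A), r • s = π r * s)
    {z : B ⊗[k] A} (hz : z ∈ TRel k S B A φ) : h.tensorCoeff π z = 0 := by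
  suffices ∀ b : B, h.tensorCoeff π (b • z) = 0 by simpa only [one_smul] using this 1
  rw [TRel] at hz
  induction hz using Submodule.span_induction with
  | mem z hz =>
    obtain ⟨b', r, s, rfl⟩ := hz
    intro b
    rw [smul_sub, TensorProduct.smul_tmul', TensorProduct.smul_tmul', map_sub, sub_eq_zero]
    funext a
    rw [tensorCoeff_tmul, tensorCoeff_tmul, smul_eq_mul, smul_eq_mul, ← mul_assoc, h.coeff_mul_map,
      hπ, Polynomial.map_mul, Polynomial.map_C, Polynomial.C_mul, mul_assoc]
    rfl
  | zero =>
    intro b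
    rw [smul_zero, map_zero]
  | add y z _ _ hy hz =>
    intro b
    rw [smul_add, map_add, hy, hz, add_zero]
  | smul b' z _ hz =>
    intro b
    rw [smul_smul]
    exact hz _

/-- The coefficient map on the balanced tensor product `B ⊗_S A`. -/
noncomputable def balancedCoeff (h : IsPolyBasis φ x v)
    (hπ : ∀ (r : S) (s : A), r • s = π r * s) : OT k S B A φ →+ (Fin m → Polynomial A) :=
  QuotientAddGroup.lift (TRel k S B A φ).toAddSubgroup (h.tensorCoeff π).toAddMonoidHom
    fun _ hz => h.tensorCoeff_mem_TRel hπ hz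

lemma balancedCoeff_OTmk (h : IsPolyBasis φ x v) (hπ : ∀ (r : S) (s : A), r • s = π r * s)
    (z : B ⊗[k] A) : h.balancedCoeff hπ (OTmk k S B A φ z) = h.tensorCoeff π z := rfl

lemma balancedComb_single_map_mul_C (h : IsPolyBasis φ x v)
    (hπ : ∀ (r : S) (s : A), r • s = π r * s) (a : Fin m) (f : Polynomial S) (s : A) :
    balancedComb S A φ x v (Pi.single a (f.map (π : S →+* A) * Polynomial.C s)) =
      OTmk k S B A φ ((v a * polyEval φ x f) ⊗ₜ[k] s) := by
  induction f using Polynomial.induction_on' with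
  | add f g hf hg =>
    rw [Polynomial.map_add, add_mul, Pi.single_add, map_add, hf, hg, map_add, mul_add,
      TensorProduct.add_tmul]
    rfl
  | monomial c r =>
    rw [Polynomial.map_monomial, Polynomial.monomial_mul_C, balancedComb_single_monomial,
      polyEval_monomial, ((h.commute r).pow_right c).eq, ← mul_assoc, OTmk_mul_map_tmul, hπ]
    rfl

lemma balancedComb_tensorCoeff_tmul (h : IsPolyBasis φ x v)
    (hπ : ∀ (r : S) (s : A), r • s = π r * s) (b : B) (s : A) :
    balancedComb S A φ x v (h.tensorCoeff π (b ⊗ₜ[k] s)) = OTmk k S B A φ (b ⊗ₜ[k] s) := by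
  rw [← Finset.univ_sum_single (h.tensorCoeff π _), map_sum]
  simp only [tensorCoeff_tmul, h.balancedComb_single_map_mul_C hπ]
  calc ∑ a, OTmk k S B A φ ((v a * polyEval φ x (h.coeff b a)) ⊗ₜ[k] s)
      = OTmk k S B A φ (polyComb φ x v (h.coeff b) ⊗ₜ[k] s) := by
        rw [polyComb_apply, TensorProduct.sum_tmul]
        exact (map_sum (TRel k S B A φ).mkQ _ _).symm
    _ = OTmk k S B A φ (b ⊗ₜ[k] s) := by
        rw [h.polyComb_coeff, OTmk_mul_map_tmul, hπ, map_one, one_mul]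

lemma balancedComb_balancedCoeff (h : IsPolyBasis φ x v)
    (hπ : ∀ (r : S) (s : A), r • s = π r * s) (y : OT k S B A φ) :
    balancedComb S A φ x v (h.balancedCoeff hπ y) = y := by
  obtain ⟨z, rfl⟩ := Submodule.Quotient.mk_surjective _ y
  change balancedComb S A φ x v (h.tensorCoeff π z) = (TRel k S B A φ).mkQ z
  induction z using TensorProduct.induction_on with
  | zero => simp only [map_zero]
  | add y z hy hz => simp only [map_add, hy, hz]
  | tmul b s => exact h.balancedComb_tensorCoeff_tmul hπ b s

lemma balancedCoeff_balancedComb (h : IsPolyBasis φ x v)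
    (hπ : ∀ (r : S) (s : A), r • s = π r * s) (g : Fin m → Polynomial A) :
    h.balancedCoeff hπ (balancedComb S A φ x v g) = g := by
  suffices ∀ a f, h.balancedCoeff hπ (balancedComb S A φ x v (Pi.single a f)) = Pi.single a f by
    conv_lhs => rw [← Finset.univ_sum_single g, map_sum, map_sum]
    simp only [this, Finset.univ_sum_single]
  intro a f
  induction f using Polynomial.induction_on' with
  | add f g hf hg => rw [Pi.single_add, map_add, map_add, hf, hg]
  | monomial c s =>
    rw [balancedComb_single_monomial, balancedCoeff_OTmk]
    funext b
    rw [tensorCoeff_tmul, h.coeff_basis_mul_pow]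
    rcases eq_or_ne b a with rfl | hb
    · rw [Pi.single_eq_same, Pi.single_eq_same, Polynomial.map_monomial, Polynomial.monomial_mul_C,
        map_one, one_mul]
    · rw [Pi.single_eq_of_ne hb, Pi.single_eq_of_ne hb, Polynomial.map_zero, zero_mul]

/-- Freeness passes to the base change: `B ⊗_S A` is `A[X]^m`. -/
noncomputable def balancedEquiv (h : IsPolyBasis φ x v)
    (hπ : ∀ (r : S) (s : A), r • s = π r * s) : OT k S B A φ ≃+ (Fin m → Polynomial A) :=
  { h.balancedCoeff hπ with
    invFun := balancedComb S A φ x v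
    left_inv := h.balancedComb_balancedCoeff hπ
    right_inv := h.balancedCoeff_balancedComb hπ }

lemma balancedEquiv_OTmk (h : IsPolyBasis φ x v) (hπ : ∀ (r : S) (s : A), r • s = π r * s)
    (z : B ⊗[k] A) : h.balancedEquiv hπ (OTmk k S B A φ z) = h.tensorCoeff π z := rfl

lemma balancedEquiv_tmul_mul (h : IsPolyBasis φ x v) (hπ : ∀ (r : S) (s : A), r • s = π r * s)
    (b : B) (s r : A) (a : Fin m) :
    h.balancedEquiv hπ (OTmk k S B A φ (b ⊗ₜ[k] (s * r))) a =
      h.balancedEquiv hπ (OTmk k S B A φ (b ⊗ₜ[k] s)) a * Polynomial.C r := by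
  simp only [balancedEquiv_OTmk, tensorCoeff_tmul]
  rw [Polynomial.C_mul, mul_assoc]

lemma balancedEquiv_mul_x_tmul (h : IsPolyBasis φ x v) (hπ : ∀ (r : S) (s : A), r • s = π r * s)
    (b : B) (s : A) (a : Fin m) :
    h.balancedEquiv hπ (OTmk k S B A φ ((b * (x * φ 1)) ⊗ₜ[k] s)) a =
      h.balancedEquiv hπ (OTmk k S B A φ (b ⊗ₜ[k] s)) a * Polynomial.X := by
  simp only [balancedEquiv_OTmk, tensorCoeff_tmul]
  rw [h.coeff_mul_x, Polynomial.map_mul, Polynomial.map_X, mul_assoc, mul_assoc,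
    Polynomial.X_mul_C]

theorem exists_module_balanced (h : IsPolyBasis φ x v)
    (hπ : ∀ (r : S) (s : A), r • s = π r * s) {y : B} (hy : y = x * φ 1) :
    ∃ inst : Module (A ⊗[k] Polynomial k)ᵐᵒᵖ (OT k S B A φ),
      letI := inst
      (∀ (r : A) (b : B) (s : A),
        op (r ⊗ₜ[k] (1 : Polynomial k)) • OTmk k S B A φ (b ⊗ₜ[k] s) =
          OTmk k S B A φ (b ⊗ₜ[k] (s * r))) ∧
      (∀ (b : B) (s : A),
        op ((1 : A) ⊗ₜ[k] (Polynomial.X : Polynomial k)) • OTmk k S B A φ (b ⊗ₜ[k] s) =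
          OTmk k S B A φ ((b * y) ⊗ₜ[k] s)) ∧
      Module.Finite (A ⊗[k] Polynomial k)ᵐᵒᵖ (OT k S B A φ) ∧
      Module.Projective (A ⊗[k] Polynomial k)ᵐᵒᵖ (OT k S B A φ) := by
  let Ω : OT k S B A φ ≃+ (Fin m → (A ⊗[k] Polynomial k)ᵐᵒᵖ) := (h.balancedEquiv hπ).trans
    (AddEquiv.piCongrRight fun _ => (polyEquivTensor k A).toAddEquiv.trans opAddEquiv)
  have hΩ (z a) : Ω z a = op (polyEquivTensor k A (h.balancedEquiv hπ z a)) := rfl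
  let inst : Module (A ⊗[k] Polynomial k)ᵐᵒᵖ (OT k S B A φ) := Ω.module _
  have hΩ_smul (t : (A ⊗[k] Polynomial k)ᵐᵒᵖ) (z) : Ω (t • z) = t • Ω z := Ω.apply_symm_apply _
  let Ωₗ : OT k S B A φ ≃ₗ[(A ⊗[k] Polynomial k)ᵐᵒᵖ] (Fin m → (A ⊗[k] Polynomial k)ᵐᵒᵖ) :=
    { Ω with map_smul' := hΩ_smul }
  refine ⟨inst, fun r b s => ?_, fun b s => ?_, .equiv Ωₗ.symm, .of_equiv Ωₗ.symm⟩
  all_goals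
    refine Ω.injective (funext fun a => ?_)
    rw [hΩ_smul, Pi.smul_apply, hΩ, hΩ]
  · rw [h.balancedEquiv_tmul_mul, map_mul, op_mul, smul_eq_mul, polyEquivTensor_apply k A (.C r),
      Polynomial.eval₂_C]
    rfl
  · rw [hy, h.balancedEquiv_mul_x_tmul, map_mul, op_mul, smul_eq_mul,
      polyEquivTensor_apply k A .X, Polynomial.eval₂_X]

end IsPolyBasis

end BaseChange

end KLR

open KLR MulOpposite TensorProduct in
set_option maxHeartbeats 1000000 in
/-- `K₀ = R(β+α_i)e(β,α_i) ⊗_{R(β)} R^Λ(β)` and `K₁ = R(β+α_i)e(α_i,β) ⊗_{R(β)} R^Λ(β)`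
are finitely generated projective right modules over `R^Λ(β) ⊗_k k[t_i]`, where `t_i`
acts by right multiplication by `x_{n+1}e(β,α_i)` on `K₀` and by `x_1 e(α_i,β)` on `K₁`. -/
theorem K0_K1_projective {k : Type} [Field k] {I : Type} [Fintype I]
    [DecidableEq I] (C : CartanDatum k I) (Λ : I → ℕ) (β : I → ℕ) (i : I) (n : ℕ)
    (hn : ht I β = n)
    (φ0 : bAlg C n β →ₙₐ[k] bAlg C (n + 1) (addA β i)) (hφ0 : IsUpRb C i φ0)
    (φ1 : bAlg C n β →ₙₐ[k] bAlg C (n + 1) (addA β i)) (hφ1 : IsUpLb C i φ1) :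
    (∃ inst : Module (cAlg C Λ n β ⊗[k] Polynomial k)ᵐᵒᵖ
        (OT k (bAlg C n β) (bAlg C (n + 1) (addA β i)) (cAlg C Λ n β) φ0),
      letI := inst
      (∀ (r : cAlg C Λ n β) (b : bAlg C (n + 1) (addA β i)) (m : cAlg C Λ n β),
          op (r ⊗ₜ[k] (1 : Polynomial k)) •
            OTmk k (bAlg C n β) (bAlg C (n + 1) (addA β i)) (cAlg C Λ n β) φ0 (b ⊗ₜ[k] m)
            = OTmk k (bAlg C n β) (bAlg C (n + 1) (addA β i)) (cAlg C Λ n β) φ0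
                (b ⊗ₜ[k] (m * r))) ∧
      (∀ (b : bAlg C (n + 1) (addA β i)) (m : cAlg C Λ n β),
          op ((1 : cAlg C Λ n β) ⊗ₜ[k] (Polynomial.X : Polynomial k)) •
            OTmk k (bAlg C n β) (bAlg C (n + 1) (addA β i)) (cAlg C Λ n β) φ0 (b ⊗ₜ[k] m)
            = OTmk k (bAlg C n β) (bAlg C (n + 1) (addA β i)) (cAlg C Λ n β) φ0
                ((b * toB C (Xx C (Fin.last n) * eR C n β i)) ⊗ₜ[k] m)) ∧
      Module.Finite (cAlg C Λ n β ⊗[k] Polynomial k)ᵐᵒᵖ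
        (OT k (bAlg C n β) (bAlg C (n + 1) (addA β i)) (cAlg C Λ n β) φ0) ∧
      Module.Projective (cAlg C Λ n β ⊗[k] Polynomial k)ᵐᵒᵖ
        (OT k (bAlg C n β) (bAlg C (n + 1) (addA β i)) (cAlg C Λ n β) φ0)) ∧
    (∃ inst : Module (cAlg C Λ n β ⊗[k] Polynomial k)ᵐᵒᵖ
        (OT k (bAlg C n β) (bAlg C (n + 1) (addA β i)) (cAlg C Λ n β) φ1),
      letI := inst
      (∀ (r : cAlg C Λ n β) (b : bAlg C (n + 1) (addA β i)) (m : cAlg C Λ n β),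
          op (r ⊗ₜ[k] (1 : Polynomial k)) •
            OTmk k (bAlg C n β) (bAlg C (n + 1) (addA β i)) (cAlg C Λ n β) φ1 (b ⊗ₜ[k] m)
            = OTmk k (bAlg C n β) (bAlg C (n + 1) (addA β i)) (cAlg C Λ n β) φ1
                (b ⊗ₜ[k] (m * r))) ∧
      (∀ (b : bAlg C (n + 1) (addA β i)) (m : cAlg C Λ n β),
          op ((1 : cAlg C Λ n β) ⊗ₜ[k] (Polynomial.X : Polynomial k)) •
            OTmk k (bAlg C n β) (bAlg C (n + 1) (addA β i)) (cAlg C Λ n β) φ1 (b ⊗ₜ[k] m)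
            = OTmk k (bAlg C n β) (bAlg C (n + 1) (addA β i)) (cAlg C Λ n β) φ1
                ((b * toB C (Xx C 0 * eL C n β i)) ⊗ₜ[k] m)) ∧
      Module.Finite (cAlg C Λ n β ⊗[k] Polynomial k)ᵐᵒᵖ
        (OT k (bAlg C n β) (bAlg C (n + 1) (addA β i)) (cAlg C Λ n β) φ1) ∧
      Module.Projective (cAlg C Λ n β ⊗[k] Polynomial k)ᵐᵒᵖ
        (OT k (bAlg C n β) (bAlg C (n + 1) (addA β i)) (cAlg C Λ n β) φ1)) := by
  have h0 := hφ0.isPolyBasis.exists_module_balanced (π := toC C (Λ := Λ)) (fun _ _ => rfl)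
    (y := toB C (Xx C (Fin.last n) * eR C n β i)) (by rw [hφ0.apply_one, map_mul])
  have h1 := hφ1.isPolyBasis.exists_module_balanced (π := toC C (Λ := Λ)) (fun _ _ => rfl)
    (y := toB C (Xx C 0 * eL C n β i)) (by rw [hφ1.apply_one, map_mul])
  exact ⟨h0, h1⟩
end
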